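/- arXiv:2207.14701 — 5 statements merged into one kernel-verified Lean document; each statement's English description precedes it below -/
import Mathlib

section
/- Let n ≥ 1 and let g : ℝ^{n+1} → Sym(n+1,ℝ) be a continuous map into symmetric (n+1)×(n+1) real matrices of null-coordinate form, i.e. g_{00} = 0, g_{01} = g_{10} = 1, and g_{0i} = g_{i0} = 0 for 2 ≤ i ≤ n (indices run 0,…,n). For ε > 0 let A_ε := diag(1, ε², ε, …, ε), and define h_ε : ℝ^{n+1} → Sym(n+1,ℝ) by (h_ε)_{00} = 0, (h_ε)_{01} = (h_ε)_{10} = 1, (h_ε)_{0i} = 0, (h_ε)_{11}(y) = ε² g_{11}(A_ε y), (h_ε)_{1j}(y) = (h_ε)_{j1}(y) = ε g_{1j}(A_ε y) for 2 ≤ j ≤ n, and (h_ε)_{ij}(y) = g_{ij}(A_ε y) for 2 ≤ i,j ≤ n. Then: (1) for every y ∈ ℝ^{n+1} and every ε > 0, A_εᵀ · g(A_ε y) · A_ε = ε² · h_ε(y) (i.e. the pullback of g under the scaling diffeomorphism (x⁰,x¹,x²,…,xⁿ) ↦ (x⁰, x¹/ε², x²/ε, …, xⁿ/ε) is homothetic,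 with factor ε², to h_ε); and (2) as ε → 0⁺, h_ε(y) converges entrywise to the matrix h_PW(y) with (h_PW)_{00} = 0, (h_PW)_{01} = (h_PW)_{10} = 1, (h_PW)_{11} = (h_PW)_{0i} = (h_PW)_{1i} = 0, and (h_PW)_{ij}(y) = g_{ij}(y⁰, 0, …, 0) for 2 ≤ i,j ≤ n. -/
open Matrix Filter

/-!
Conjugating by a diagonal matrix multiplies the `(i, j)` entry by the product of the two weights.
Off the null row and column every weight `ε², ε, …, ε` is divisible by `ε`; in the null row and
column the only nonzero entries have weight `1 * ε²`. Hence the factor `ε²` splits off, and what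
remains is built from powers of `ε` and the entries of `g (A ε y)`. It is therefore continuous at
`ε = 0`, and the plane wave limit is its value there.
-/

open scoped Topology

section PenroseLimit

variable {ι R : Type*} [DecidableEq ι] [CommSemiring R] {u v : ι} {M : Matrix ι ι R}

/-- A metric matrix in null coordinates: the coordinate vector field `∂ᵤ` is null, has product `1`
with `∂ᵥ`, and is orthogonal to the remaining (transverse) coordinate fields. -/
structure IsNullForm (u v : ι) (M : Matrix ι ι R) : Prop where
  isSymm : M.IsSymm
  null : M u u = 0
  pairing : M u v = 1
  orthogonal : ∀ i, i ≠ u → i ≠ v → M u i = 0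

/-- The diagonal entries of Penrose's anisotropic scaling: `1` in the direction `u`, `ε²` in the
direction `v`, and `ε` in the transverse directions. -/
def penroseWeight (u v : ι) (ε : R) (i : ι) : R :=
  if i = u then 1 else if i = v then ε ^ 2 else ε

/-- The matrix of Penrose's anisotropic scaling of null coordinates. -/
def penroseScaling (u v : ι) (ε : R) : Matrix ι ι R :=
  diagonal (penroseWeight u v ε)

/-- The matrix `ε⁻² Aᵀ M A` for a matrix `M` in null form and the scaling matrix `A`, written
without division so that it also makes sense at `ε = 0`. -/
def penroseRescale (u v : ι) (ε : R) (M : Matrix ι ι R) : Matrix ι ι R :=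
  of fun i j =>
    if i = u ∧ j = u then 0
    else if (i = u ∧ j = v) ∨ (i = v ∧ j = u) then 1
    else if i = u ∨ j = u then 0
    else if i = v ∧ j = v then ε ^ 2 * M v v
    else if i = v then ε * M v j
    else if j = v then ε * M i v
    else M i j

/-- The value of a plane wave metric in Rosen coordinates at a point where the transverse block of
the metric is that of `M`. -/
def rosenMatrix (u v : ι) (M : Matrix ι ι R) : Matrix ι ι R :=
  of fun i j =>
    if i = u ∧ j = u then 0
    else if (i = u ∧ j = v) ∨ (i = v ∧ j = u) then 1
    else if i = u ∨ i = v ∨ j = u ∨ j = v then 0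
    else M i j

theorem penroseRescale_zero (u v : ι) (M : Matrix ι ι R) :
    penroseRescale u v 0 M = rosenMatrix u v M := by
  ext i j
  simp only [penroseRescale, rosenMatrix, of_apply]
  grind

theorem penroseScaling_zero_mulVec [Fintype ι] (u v : ι) (y : ι → R) :
    penroseScaling u v 0 *ᵥ y = fun k => if k = u then y u else 0 := by
  ext k
  rw [penroseScaling, mulVec_diagonal, penroseWeight]
  split_ifs with hu hv
  · rw [one_mul, hu]
  · rw [zero_pow two_ne_zero, zero_mul]
  · rw [zero_mul]

theorem penroseRescale_isSymm (hM : M.IsSymm) (u v : ι) (ε : R) :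
    (penroseRescale u v ε M).IsSymm := by
  ext i j
  have hij := hM.apply i j
  simp only [penroseRescale, transpose_apply, of_apply]
  grind

theorem penroseWeight_of_ne {i : ι} (hi : i ≠ u) (v : ι) (ε : R) :
    penroseWeight u v ε i = ε * if i = v then ε else 1 := by
  rw [penroseWeight, if_neg hi]
  split_ifs <;> ring

theorem penroseRescale_apply_of_ne {i j : ι} (hi : i ≠ u) (hj : j ≠ u) (v : ι) (ε : R)
    (M : Matrix ι ι R) :
    penroseRescale u v ε M i j =
      (if i = v then ε else 1) * M i j * (if j = v then ε else 1) := by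
  simp only [penroseRescale, of_apply, hi, hj, and_false, false_and, or_self, if_false]
  rcases eq_or_ne i v with rfl | hiv
  · rcases eq_or_ne j i with rfl | hjv
    · simp only [and_self, if_true]
      ring
    · simp only [hjv, and_false, if_true, if_false, mul_one]
  · simp only [hiv, false_and, if_false, one_mul]
    split_ifs with hjv
    · rw [hjv, mul_comm]
    · rw [mul_one]

theorem penroseWeight_mul_mul_of_ne {i j : ι} (hi : i ≠ u) (hj : j ≠ u) (ε : R) :
    penroseWeight u v ε i * M i j * penroseWeight u v ε j =
      ε ^ 2 * penroseRescale u v ε M i j := by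
  rw [penroseWeight_of_ne hi, penroseWeight_of_ne hj, penroseRescale_apply_of_ne hi hj]
  ring

namespace IsNullForm

theorem penroseWeight_mul_mul_left (hM : IsNullForm u v M) (ε : R) (j : ι) :
    penroseWeight u v ε u * M u j * penroseWeight u v ε j =
      ε ^ 2 * penroseRescale u v ε M u j := by
  rcases eq_or_ne j u with rfl | hju
  · simp [penroseRescale, hM.null]
  rcases eq_or_ne j v with rfl | hjv
  · simp [penroseWeight, penroseRescale, hM.pairing, hju]
  · simp [penroseRescale, hM.orthogonal j hju hjv, hju, hjv]

theorem penroseWeight_mul_mul (hM : IsNullForm u v M) (ε : R) (i j : ι) :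
    penroseWeight u v ε i * M i j * penroseWeight u v ε j =
      ε ^ 2 * penroseRescale u v ε M i j := by
  rcases eq_or_ne i u with rfl | hi
  · exact hM.penroseWeight_mul_mul_left ε j
  rcases eq_or_ne j u with rfl | hj
  · have htranspose := hM.penroseWeight_mul_mul_left ε i
    rw [hM.isSymm.apply, (penroseRescale_isSymm hM.isSymm j v ε).apply] at htranspose
    rw [← htranspose]
    ring
  · exact penroseWeight_mul_mul_of_ne hi hj ε

theorem transpose_penroseScaling_mul_mul [Fintype ι] (hM : IsNullForm u v M) (ε : R) :
    (penroseScaling u v ε)ᵀ * M * penroseScaling u v ε = ε ^ 2 • penroseRescale u v ε M := by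
  ext i j
  rw [penroseScaling, diagonal_transpose, mul_diagonal, diagonal_mul, Matrix.smul_apply,
    smul_eq_mul]
  exact hM.penroseWeight_mul_mul ε i j

end IsNullForm

section Continuity

variable [TopologicalSpace R]

theorem continuous_penroseScaling [ContinuousMul R] (u v : ι) :
    Continuous (penroseScaling u v : R → Matrix ι ι R) := by
  refine Continuous.matrix_diagonal (continuous_pi fun i => ?_)
  unfold penroseWeight
  split_ifs <;> fun_prop

theorem continuous_penroseRescale {X : Type*} [TopologicalSpace X] [ContinuousMul R] (u v : ι)
    {ε : X → R} {M : X → Matrix ι ι R} (hε : Continuous ε) (hM : Continuous M) :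
    Continuous fun x => penroseRescale u v (ε x) (M x) := by
  refine continuous_matrix fun i j => ?_
  have hentry : ∀ a b, Continuous fun x => M x a b := hM.matrix_elem
  simp only [penroseRescale, of_apply]
  split_ifs <;> fun_prop

theorem tendsto_penroseRescale [IsTopologicalSemiring R] [Fintype ι] (u v : ι)
    {g : (ι → R) → Matrix ι ι R} (hg : Continuous g) (y : ι → R) :
    Tendsto (fun ε => penroseRescale u v ε (g (penroseScaling u v ε *ᵥ y))) (𝓝 0)
      (𝓝 (rosenMatrix u v (g fun k => if k = u then y u else 0))) := by
  have hcont : Continuous fun ε => penroseRescale u v ε (g (penroseScaling u v ε *ᵥ y)) :=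
    continuous_penroseRescale u v continuous_id
      (hg.comp ((continuous_penroseScaling u v).matrix_mulVec continuous_const))
  have hlim := hcont.tendsto 0
  rwa [penroseRescale_zero, penroseScaling_zero_mulVec] at hlim

end Continuity

theorem stmt_0_general [Fintype ι] [TopologicalSpace R] [IsTopologicalSemiring R]
    {g : (ι → R) → Matrix ι ι R} (hg_cont : Continuous g) (hg : ∀ x, IsNullForm u v (g x)) :
    (∀ y ε, (penroseScaling u v ε)ᵀ * g (penroseScaling u v ε *ᵥ y) * penroseScaling u v ε =
      ε ^ 2 • penroseRescale u v ε (g (penroseScaling u v ε *ᵥ y))) ∧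
    (∀ y, Tendsto (fun ε => penroseRescale u v ε (g (penroseScaling u v ε *ᵥ y))) (𝓝 0)
      (𝓝 (rosenMatrix u v (g fun k => if k = u then y u else 0)))) :=
  ⟨fun _ ε => (hg _).transpose_penroseScaling_mul_mul ε, tendsto_penroseRescale u v hg_cont⟩

end PenroseLimit

theorem two_le_val_of_ne_zero_of_ne_one {n : ℕ} {i : Fin (n + 1)} (h0 : i ≠ 0) (h1 : i ≠ 1) :
    2 ≤ (i : ℕ) := by
  rcases n with _ | n
  · exact absurd (Fin.fin_one_eq_zero i) h0
  · simp only [ne_eq, Fin.ext_iff, Fin.val_zero, Fin.val_one] at h0 h1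
    omega

/-- Penrose's plane wave limit: the pullback of a null-coordinate-form metric `g` under the
anisotropic scaling with matrix `A ε = diag(1, ε², ε, …, ε)` is `ε²`-homothetic to the family
`h ε`, which converges entrywise as `ε → 0⁺` to the plane wave metric in Rosen coordinates. -/
theorem stmt_0 (n : ℕ) (hn : 1 ≤ n)
    (g : (Fin (n+1) → ℝ) → Matrix (Fin (n+1)) (Fin (n+1)) ℝ)
    (hg_cont : Continuous g)
    (hg_symm : ∀ x, (g x).IsSymm)
    (hg00 : ∀ x, g x 0 0 = 0)
    (hg01 : ∀ x, g x 0 1 = 1)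
    (hg0i : ∀ x, ∀ i : Fin (n+1), 2 ≤ (i : ℕ) → g x 0 i = 0)
    (A : ℝ → Matrix (Fin (n+1)) (Fin (n+1)) ℝ)
    (hA : ∀ ε, A ε = Matrix.diagonal (fun i => if i = 0 then 1 else if i = 1 then ε^2 else ε))
    (h : ℝ → (Fin (n+1) → ℝ) → Matrix (Fin (n+1)) (Fin (n+1)) ℝ)
    (hh : ∀ ε y (i j : Fin (n+1)), h ε y i j =
      if i = 0 ∧ j = 0 then 0
      else if (i = 0 ∧ j = 1) ∨ (i = 1 ∧ j = 0) then 1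
      else if i = 0 ∨ j = 0 then 0
      else if i = 1 ∧ j = 1 then ε^2 * g ((A ε).mulVec y) 1 1
      else if i = 1 then ε * g ((A ε).mulVec y) 1 j
      else if j = 1 then ε * g ((A ε).mulVec y) i 1
      else g ((A ε).mulVec y) i j) :
    (∀ y : Fin (n+1) → ℝ, ∀ ε : ℝ, 0 < ε →
      (A ε)ᵀ * g ((A ε).mulVec y) * A ε = (ε^2) • h ε y) ∧
    (∀ y : Fin (n+1) → ℝ, ∀ i j : Fin (n+1),
      Tendsto (fun ε => h ε y i j) (nhdsWithin 0 (Set.Ioi 0))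
        (nhds (if i = 0 ∧ j = 0 then 0
          else if (i = 0 ∧ j = 1) ∨ (i = 1 ∧ j = 0) then 1
          else if i = 0 ∨ i = 1 ∨ j = 0 ∨ j = 1 then 0
          else g (fun k => if k = 0 then y 0 else 0) i j))) := by
  have hg : ∀ x, IsNullForm 0 1 (g x) := fun x =>
    ⟨hg_symm x, hg00 x, hg01 x, fun i h0 h1 =>
      hg0i x i (two_le_val_of_ne_zero_of_ne_one h0 h1)⟩
  obtain rfl : A = penroseScaling 0 1 := funext hA
  obtain rfl : h = fun ε y => penroseRescale 0 1 ε (g (penroseScaling 0 1 ε *ᵥ y)) := by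
    ext ε y i j
    exact hh ε y i j
  obtain ⟨hpullback, hlim⟩ := stmt_0_general hg_cont hg
  exact ⟨fun y ε _ => hpullback y ε, fun y i j =>
    (((hlim y).mono_left nhdsWithin_le_nhds).apply_nhds i).apply_nhds j⟩
end

section
/- Let n ≥ 2, let H : ℝ^{n+1} → ℝ be a smooth function of the coordinates (v, u, x², …, xⁿ) that is independent of v, and let g be the pp-wave metric in Brinkmann coordinates: g_{vv} = 0, g_{vu} = g_{uv} = 1, g_{uu} = H, g_{ii} = 1 for 2 ≤ i ≤ n, all other entries zero. Then the coordinate curvature 4-tensor of g satisfies Rm(∂_i, ∂_u, ∂_u, ∂_j) = −(1/2) ∂_i∂_j H for all 2 ≤ i, j ≤ n, and every component of Rm that is not obtained from these by the symmetries of the curvature tensor vanishes; moreover the coordinate Ricci tensor satisfies Ric(∂_u, ∂_u) = −(1/2) ΔH, where ΔH := Σ_{i=2}^{n} ∂_i² H, and all other components of Ric vanish. In particular g is Ricci-flat if and only if H is harmonic in the variables x², …, xⁿ. -/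
/-!
A pp-wave metric has the form `g = η + H ℓ ⊗ ℓ` with `η` a constant metric, `ℓ` a constant null
covector, and `H` invariant along the null vector `η⁻¹ ℓ`. On covectors `w` orthogonal to `ℓ` the
inverses `g⁻¹` and `η⁻¹` agree, and both `ℓ` and `dH` are such covectors. So every index is raised
with the constant matrix `η⁻¹`, and the Christoffel symbols are `η⁻¹` applied to a form which is
linear in `dH`. In the products `Γ^l_{ap} Γ^p_{bc}` only the term with `|dH|²` survives; it carries
`ℓ_a ℓ_b ℓ_c`, so it cancels under antisymmetrisation in `a, b`. The curvature is therefore linear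
in the Hessian of `H`: it is half the Kulkarni–Nomizu product of `Hess H` with `ℓ ⊗ ℓ`.

In Brinkmann coordinates `ℓ = du`, and `η` is the permutation matrix exchanging `v` and `u`.
-/

open Matrix

/-- Partial derivative of a function on `ℝ^m` in the `i`-th coordinate direction. -/
noncomputable def pd {m : ℕ} (i : Fin m) (f : (Fin m → ℝ) → ℝ) (x : Fin m → ℝ) : ℝ :=
  fderiv ℝ f x (Pi.single i 1)

/-- Christoffel symbols `Γ^k_{ij}` of a metric given in coordinates. -/
noncomputable def Chr {m : ℕ} (g : (Fin m → ℝ) → Matrix (Fin m) (Fin m) ℝ)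
    (k i j : Fin m) (x : Fin m → ℝ) : ℝ :=
  (1/2) * ∑ l, (g x)⁻¹ k l *
    (pd i (fun y => g y j l) x + pd j (fun y => g y i l) x - pd l (fun y => g y i j) x)

/-- Coordinate curvature `R_{ijk}{}^l`. -/
noncomputable def RiemUp {m : ℕ} (g : (Fin m → ℝ) → Matrix (Fin m) (Fin m) ℝ)
    (i j k l : Fin m) (x : Fin m → ℝ) : ℝ :=
  pd i (Chr g l j k) x - pd j (Chr g l i k) x
  + ∑ p, (Chr g l i p x * Chr g p j k x - Chr g l j p x * Chr g p i k x)

/-- Coordinate curvature 4-tensor `Rm_{ijkl} = Σ_m g_{lm} R_{ijk}{}^m`. -/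
noncomputable def Rm4 {m : ℕ} (g : (Fin m → ℝ) → Matrix (Fin m) (Fin m) ℝ)
    (i j k l : Fin m) (x : Fin m → ℝ) : ℝ :=
  ∑ p, g x l p * RiemUp g i j k p x

/-- Coordinate Ricci tensor `Ric_{jk} = Σ_i R_{ijk}{}^i`. -/
noncomputable def Ric {m : ℕ} (g : (Fin m → ℝ) → Matrix (Fin m) (Fin m) ℝ)
    (j k : Fin m) (x : Fin m → ℝ) : ℝ :=
  ∑ i, RiemUp g i j k i x

section PartialDerivatives

variable {m : ℕ} {H : (Fin m → ℝ) → ℝ}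

/-- The differential `dH` of `H` at `x`, as the covector of its partial derivatives. -/
noncomputable def differential (H : (Fin m → ℝ) → ℝ) (x : Fin m → ℝ) : Fin m → ℝ :=
  fun i => pd i H x

/-- The coordinate Hessian of `H` at `x`; its row `i` is the `i`-th partial derivative of
`differential H`. -/
noncomputable def hessian (H : (Fin m → ℝ) → ℝ) (x : Fin m → ℝ) : Matrix (Fin m) (Fin m) ℝ :=
  of fun i j => pd i (pd j H) x

lemma pd_const (i : Fin m) (c : ℝ) (x : Fin m → ℝ) : pd i (fun _ => c) x = 0 := by
  simp [pd]

lemma pd_linearMap_comp {k : ℕ} (L : (Fin k → ℝ) →ₗ[ℝ] ℝ) {w : (Fin m → ℝ) → Fin k → ℝ}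
    {x : Fin m → ℝ} (hw : DifferentiableAt ℝ w x) (i : Fin m) :
    pd i (fun y => L (w y)) x = L fun j => pd i (fun y => w y j) x := by
  have hL : HasFDerivAt (fun y => L (w y)) (L.toContinuousLinearMap ∘L fderiv ℝ w x) x :=
    L.toContinuousLinearMap.hasFDerivAt.comp x hw.hasFDerivAt
  have hpd : (fun j => pd i (fun y => w y j) x) = fderiv ℝ w x (Pi.single i 1) := by
    ext j
    rw [pd, (hasFDerivAt_pi'.1 hw.hasFDerivAt j).fderiv]
    rfl
  rw [hpd, pd, hL.fderiv]
  rfl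

lemma pd_eq_zero_of_update_eq {x : Fin m → ℝ} {i : Fin m} (hd : DifferentiableAt ℝ H x)
    (hi : ∀ c, H (Function.update x i c) = H x) : pd i H x = 0 := by
  have hline : HasDerivAt (fun t => H (Function.update x i t)) (pd i H x) (x i) := by
    refine HasFDerivAt.comp_hasDerivAt (x i) ?_ (hasDerivAt_update x i (x i))
    simpa only [Function.update_eq_self] using hd.hasFDerivAt
  simp only [hi] at hline
  exact hline.unique (hasDerivAt_const _ _)

lemma differentiable_fderiv_of_contDiff_two (hH : ContDiff ℝ 2 H) :
    Differentiable ℝ (fderiv ℝ H) :=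
  (hH.fderiv_right (m := 1) (by norm_num)).differentiable (by simp)

lemma differentiable_differential (hH : ContDiff ℝ 2 H) :
    Differentiable ℝ (differential H) :=
  differentiable_pi.2 fun _ x =>
    (differentiable_fderiv_of_contDiff_two hH x).clm_apply (differentiableAt_const _)

lemma hessian_apply (hH : ContDiff ℝ 2 H) (x : Fin m → ℝ) (i j : Fin m) :
    hessian H x i j = fderiv ℝ (fderiv ℝ H) x (Pi.single i 1) (Pi.single j 1) := by
  change fderiv ℝ (fun y => fderiv ℝ H y (Pi.single j 1)) x (Pi.single i 1) = _
  rw [fderiv_clm_apply (differentiable_fderiv_of_contDiff_two hH x) (differentiableAt_const _)]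
  simp

lemma hessian_isSymm (hH : ContDiff ℝ 2 H) (x : Fin m → ℝ) : (hessian H x).IsSymm := by
  refine Matrix.IsSymm.ext fun i j => ?_
  rw [hessian_apply hH, hessian_apply hH]
  exact hH.contDiffAt.isSymmSndFDerivAt (by simp) _ _

end PartialDerivatives

section KulkarniNomizu

variable {ι R : Type*} [CommRing R]

/-- The Kulkarni–Nomizu product of two bilinear forms given by matrices, with the sign convention
`(h ∧ k)(a, b, c, d) = h(a, c) k(b, d) + ⋯`. -/
def kulkarniNomizu (h k : Matrix ι ι R) (a b c d : ι) : R :=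
  h a c * k b d + h b d * k a c - h a d * k b c - h b c * k a d

lemma kulkarniNomizu_pair_comm {h k : Matrix ι ι R} (hh : h.IsSymm) (hk : k.IsSymm)
    (a b c d : ι) : kulkarniNomizu h k a b c d = kulkarniNomizu h k c d a b := by
  simp only [kulkarniNomizu, hh.apply a c, hh.apply b d, hh.apply a d, hh.apply b c,
    hk.apply a c, hk.apply b d, hk.apply a d, hk.apply b c]
  ring

lemma sum_mulVec_kulkarniNomizu_vecMulVec [Fintype ι] (A h : Matrix ι ι R) (ℓ : ι → R)
    (b c : ι) :
    ∑ a, (A *ᵥ kulkarniNomizu h (vecMulVec ℓ ℓ) a b c) a =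
      ℓ b * (h.col c ⬝ᵥ A *ᵥ ℓ) + ℓ c * (ℓ ⬝ᵥ A *ᵥ h b) - ℓ b * ℓ c * trace (A * hᵀ) -
        h b c * (ℓ ⬝ᵥ A *ᵥ ℓ) := by
  simp only [mulVec, dotProduct, trace, diag_apply, mul_apply, transpose_apply, col_apply,
    kulkarniNomizu, vecMulVec_apply, Finset.mul_sum, ← Finset.sum_add_distrib,
    ← Finset.sum_sub_distrib]
  exact Finset.sum_congr rfl fun a _ => Finset.sum_congr rfl fun d _ => by ring

end KulkarniNomizu

lemma dotProduct_mulVec_comm_of_isSymm {ι R : Type*} [Fintype ι] [CommSemiring R]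
    {A : Matrix ι ι R} (hA : A.IsSymm) (v w : ι → R) : v ⬝ᵥ A *ᵥ w = w ⬝ᵥ A *ᵥ v := by
  rw [dotProduct_mulVec, ← mulVec_transpose, hA.eq, dotProduct_comm]

section KerrSchild

variable {m : ℕ} {η : Matrix (Fin m) (Fin m) ℝ} {ℓ : Fin m → ℝ} {H : (Fin m → ℝ) → ℝ}

/-- The Kerr–Schild metric `η + H ℓ ⊗ ℓ` with constant background `η` and constant covector `ℓ`. -/
def kerrSchild (η : Matrix (Fin m) (Fin m) ℝ) (ℓ : Fin m → ℝ) (H : (Fin m → ℝ) → ℝ)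
    (x : Fin m → ℝ) : Matrix (Fin m) (Fin m) ℝ :=
  η + H x • vecMulVec ℓ ℓ

lemma isUnit_det_kerrSchild (hη : IsUnit η.det) (hnull : ℓ ⬝ᵥ η⁻¹ *ᵥ ℓ = 0) (x : Fin m → ℝ) :
    IsUnit (kerrSchild η ℓ H x).det := by
  have hdet : (kerrSchild η ℓ H x).det = η.det := by
    rw [kerrSchild, ← smul_vecMulVec, vecMulVec_eq Unit, det_add_replicateCol_mul_replicateRow hη,
      Matrix.mul_assoc, ← replicateCol_mulVec, replicateRow_mul_replicateCol, mulVec_smul,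
      dotProduct_smul, hnull]
    simp
  rwa [hdet]

lemma kerrSchild_mulVec (hη : IsUnit η.det) {w : Fin m → ℝ} (hw : ℓ ⬝ᵥ η⁻¹ *ᵥ w = 0)
    (x : Fin m → ℝ) : kerrSchild η ℓ H x *ᵥ η⁻¹ *ᵥ w = w := by
  rw [kerrSchild, add_mulVec, smul_mulVec, vecMulVec_mulVec, hw, mulVec_mulVec,
    mul_nonsing_inv η hη]
  simp

lemma kerrSchild_inv_mulVec (hη : IsUnit η.det) (hnull : ℓ ⬝ᵥ η⁻¹ *ᵥ ℓ = 0) {w : Fin m → ℝ}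
    (hw : ℓ ⬝ᵥ η⁻¹ *ᵥ w = 0) (x : Fin m → ℝ) : (kerrSchild η ℓ H x)⁻¹ *ᵥ w = η⁻¹ *ᵥ w := by
  conv_lhs => rw [← kerrSchild_mulVec (H := H) hη hw x]
  rw [mulVec_mulVec, nonsing_inv_mul _ (isUnit_det_kerrSchild hη hnull x), one_mulVec]

lemma pd_kerrSchild {x : Fin m → ℝ} (hH : DifferentiableAt ℝ H x) (a i j : Fin m) :
    pd a (fun y => kerrSchild η ℓ H y i j) x = ℓ i * ℓ j * differential H x a := by
  have h : HasFDerivAt (fun y => kerrSchild η ℓ H y i j) ((ℓ i * ℓ j) • fderiv ℝ H x) x :=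
    (hH.hasFDerivAt.mul_const (ℓ i * ℓ j)).const_add (η i j)
  rw [pd, h.fderiv]
  rfl

/-- The covector `l ↦ Γ_{lij}` of Christoffel symbols of the first kind of `η + H ℓ ⊗ ℓ`, as a
linear function of `w = dH`. -/
noncomputable def christoffelForm (ℓ : Fin m → ℝ) (i j : Fin m) :
    (Fin m → ℝ) →ₗ[ℝ] (Fin m → ℝ) :=
  (1 / 2 : ℝ) • (LinearMap.smulRight (ℓ j • LinearMap.proj i + ℓ i • LinearMap.proj j) ℓ -
    (ℓ i * ℓ j) • LinearMap.id)

lemma christoffelForm_eq (i j : Fin m) (w : Fin m → ℝ) :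
    christoffelForm ℓ i j w =
      (1 / 2 : ℝ) • ((ℓ j * w i + ℓ i * w j) • ℓ - (ℓ i * ℓ j) • w) := rfl

lemma christoffelForm_sub_eq_kulkarniNomizu {h : Matrix (Fin m) (Fin m) ℝ} (hh : h.IsSymm)
    (a b c : Fin m) :
    christoffelForm ℓ b c (h a) - christoffelForm ℓ a c (h b) =
      (1 / 2 : ℝ) • kulkarniNomizu h (vecMulVec ℓ ℓ) a b c := by
  ext d
  simp only [christoffelForm_eq, kulkarniNomizu, vecMulVec_apply, hh.apply a b, Pi.sub_apply,
    Pi.smul_apply, smul_eq_mul]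
  ring

lemma dotProduct_inv_mulVec_christoffelForm (hnull : ℓ ⬝ᵥ η⁻¹ *ᵥ ℓ = 0) {w : Fin m → ℝ}
    (hw : ℓ ⬝ᵥ η⁻¹ *ᵥ w = 0) (i j : Fin m) : ℓ ⬝ᵥ η⁻¹ *ᵥ christoffelForm ℓ i j w = 0 := by
  simp [christoffelForm_eq, mulVec_smul, mulVec_sub, hnull, hw]

lemma Chr_kerrSchild (hη : IsUnit η.det) (hnull : ℓ ⬝ᵥ η⁻¹ *ᵥ ℓ = 0) {x : Fin m → ℝ}
    (hH : DifferentiableAt ℝ H x) (hw : ℓ ⬝ᵥ η⁻¹ *ᵥ differential H x = 0) (k i j : Fin m) :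
    Chr (kerrSchild η ℓ H) k i j x = (η⁻¹ *ᵥ christoffelForm ℓ i j (differential H x)) k := by
  rw [← kerrSchild_inv_mulVec (H := H) hη hnull
    (dotProduct_inv_mulVec_christoffelForm hnull hw i j) x]
  simp only [Chr, pd_kerrSchild hH, mulVec, dotProduct, Finset.mul_sum]
  refine Finset.sum_congr rfl fun l _ => ?_
  simp only [christoffelForm_eq, differential, Pi.smul_apply, Pi.sub_apply, smul_eq_mul]
  ring

lemma sum_christoffelForm_mul_eq (hsymm : η.IsSymm) (hnull : ℓ ⬝ᵥ η⁻¹ *ᵥ ℓ = 0) {w : Fin m → ℝ}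
    (hw : ℓ ⬝ᵥ η⁻¹ *ᵥ w = 0) (a b c l : Fin m) :
    ∑ p, (η⁻¹ *ᵥ christoffelForm ℓ a p w) l * (η⁻¹ *ᵥ christoffelForm ℓ b c w) p =
      -(1 / 4) * (ℓ a * ℓ b * ℓ c) * (w ⬝ᵥ η⁻¹ *ᵥ w) * (η⁻¹ *ᵥ ℓ) l := by
  have hw' : w ⬝ᵥ η⁻¹ *ᵥ ℓ = 0 := by
    rw [dotProduct_mulVec_comm_of_isSymm hsymm.inv, hw]
  set V := η⁻¹ *ᵥ christoffelForm ℓ b c w with hV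
  have hℓV : ℓ ⬝ᵥ V = 0 := dotProduct_inv_mulVec_christoffelForm hnull hw b c
  have hwV : w ⬝ᵥ V = -(1 / 2) * (ℓ b * ℓ c) * (w ⬝ᵥ η⁻¹ *ᵥ w) := by
    simp only [hV, christoffelForm_eq, mulVec_smul, mulVec_sub, dotProduct_smul, dotProduct_sub,
      hw', smul_eq_mul]
    ring
  calc ∑ p, (η⁻¹ *ᵥ christoffelForm ℓ a p w) l * V p
      = (1 / 2) * ((w a * (η⁻¹ *ᵥ ℓ) l - ℓ a * (η⁻¹ *ᵥ w) l) * (ℓ ⬝ᵥ V) +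
          ℓ a * (η⁻¹ *ᵥ ℓ) l * (w ⬝ᵥ V)) := by
        simp only [christoffelForm_eq, mulVec_smul, mulVec_sub, dotProduct, Finset.mul_sum,
          ← Finset.sum_add_distrib, Pi.smul_apply, Pi.sub_apply, smul_eq_mul]
        exact Finset.sum_congr rfl fun p _ => by ring
    _ = _ := by rw [hℓV, hwV]; ring

lemma RiemUp_kerrSchild (hη : IsUnit η.det) (hsymm : η.IsSymm) (hnull : ℓ ⬝ᵥ η⁻¹ *ᵥ ℓ = 0)
    (hH : ContDiff ℝ 2 H) (hw : ∀ x, ℓ ⬝ᵥ η⁻¹ *ᵥ differential H x = 0)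
    (a b c l : Fin m) (x : Fin m → ℝ) :
    RiemUp (kerrSchild η ℓ H) a b c l x =
      (η⁻¹ *ᵥ (1 / 2 : ℝ) • kulkarniNomizu (hessian H x) (vecMulVec ℓ ℓ) a b c) l := by
  have hChr (k i j : Fin m) : Chr (kerrSchild η ℓ H) k i j =
      fun y => (η⁻¹ *ᵥ christoffelForm ℓ i j (differential H y)) k :=
    funext fun y => Chr_kerrSchild hη hnull (hH.differentiable (by simp) y) (hw y) k i j
  have hpd (a i j : Fin m) : pd a (Chr (kerrSchild η ℓ H) l i j) x =
      (η⁻¹ *ᵥ christoffelForm ℓ i j (hessian H x a)) l := by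
    rw [hChr]
    exact pd_linearMap_comp (LinearMap.proj l ∘ₗ η⁻¹.mulVecLin ∘ₗ christoffelForm ℓ i j)
      (differentiable_differential hH x) a
  have hquadratic : ∑ p, (Chr (kerrSchild η ℓ H) l a p x * Chr (kerrSchild η ℓ H) p b c x -
      Chr (kerrSchild η ℓ H) l b p x * Chr (kerrSchild η ℓ H) p a c x) = 0 := by
    simp only [hChr, Finset.sum_sub_distrib, sum_christoffelForm_mul_eq hsymm hnull (hw x)]
    ring
  rw [RiemUp, hquadratic, hpd, hpd, add_zero, ← Pi.sub_apply, ← mulVec_sub,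
    christoffelForm_sub_eq_kulkarniNomizu (hessian_isSymm hH x)]

lemma dotProduct_inv_mulVec_hessian (hH : ContDiff ℝ 2 H)
    (hw : ∀ x, ℓ ⬝ᵥ η⁻¹ *ᵥ differential H x = 0) (x : Fin m → ℝ) (a : Fin m) :
    ℓ ⬝ᵥ η⁻¹ *ᵥ hessian H x a = 0 := by
  have h := pd_linearMap_comp (dotProductBilin ℝ ℝ ℓ ∘ₗ η⁻¹.mulVecLin)
    (differentiable_differential hH x) a
  simp only [LinearMap.comp_apply, mulVecLin_apply, dotProductBilin_apply_apply, hw, pd_const] at h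
  exact h.symm

lemma Rm4_kerrSchild (hη : IsUnit η.det) (hsymm : η.IsSymm) (hnull : ℓ ⬝ᵥ η⁻¹ *ᵥ ℓ = 0)
    (hH : ContDiff ℝ 2 H) (hw : ∀ x, ℓ ⬝ᵥ η⁻¹ *ᵥ differential H x = 0)
    (a b c d : Fin m) (x : Fin m → ℝ) :
    Rm4 (kerrSchild η ℓ H) a b c d x =
      1 / 2 * kulkarniNomizu (hessian H x) (vecMulVec ℓ ℓ) a b c d := by
  have horth :
      ℓ ⬝ᵥ η⁻¹ *ᵥ ((1 / 2 : ℝ) • kulkarniNomizu (hessian H x) (vecMulVec ℓ ℓ) a b c) = 0 := by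
    have hform (i j k : Fin m) : ℓ ⬝ᵥ η⁻¹ *ᵥ christoffelForm ℓ i j (hessian H x k) = 0 :=
      dotProduct_inv_mulVec_christoffelForm hnull (dotProduct_inv_mulVec_hessian hH hw x k) i j
    rw [← christoffelForm_sub_eq_kulkarniNomizu (hessian_isSymm hH x), mulVec_sub,
      dotProduct_sub, hform, hform, sub_zero]
  simp only [Rm4, RiemUp_kerrSchild hη hsymm hnull hH hw]
  exact congrFun (kerrSchild_mulVec hη horth x) d

lemma Ric_kerrSchild (hη : IsUnit η.det) (hsymm : η.IsSymm) (hnull : ℓ ⬝ᵥ η⁻¹ *ᵥ ℓ = 0)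
    (hH : ContDiff ℝ 2 H) (hw : ∀ x, ℓ ⬝ᵥ η⁻¹ *ᵥ differential H x = 0)
    (b c : Fin m) (x : Fin m → ℝ) :
    Ric (kerrSchild η ℓ H) b c x = -(1 / 2) * (ℓ b * ℓ c) * trace (η⁻¹ * hessian H x) := by
  have hrow := dotProduct_inv_mulVec_hessian hH hw x
  have hcol : (hessian H x).col c ⬝ᵥ η⁻¹ *ᵥ ℓ = 0 := by
    rw [dotProduct_mulVec_comm_of_isSymm hsymm.inv, ← row_transpose, (hessian_isSymm hH x).eq]
    exact hrow c
  simp only [Ric, RiemUp_kerrSchild hη hsymm hnull hH hw, mulVec_smul, Pi.smul_apply, smul_eq_mul]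
  rw [← Finset.mul_sum, sum_mulVec_kulkarniNomizu_vecMulVec, hrow, hcol, hnull,
    (hessian_isSymm hH x).eq]
  ring

end KerrSchild

section Brinkmann

variable {n : ℕ} {H : (Fin (n + 2) → ℝ) → ℝ}

/-- The flat metric `2 dv du + ∑ (dxⁱ)²` in coordinates `(v, u, x², …, xⁿ⁺¹)`; as a matrix it is the
permutation exchanging `v` and `u`. -/
abbrev brinkmannFlat (n : ℕ) : Matrix (Fin (n + 2)) (Fin (n + 2)) ℝ :=
  Matrix.swap ℝ 0 1

/-- The covector `du` in coordinates `(v, u, x², …, xⁿ⁺¹)`. -/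
abbrev brinkmannWave (n : ℕ) : Fin (n + 2) → ℝ :=
  Pi.single 1 1

/-- The pp-wave metric `2 dv du + H du² + ∑ (dxⁱ)²` in Brinkmann coordinates. -/
abbrev brinkmann (H : (Fin (n + 2) → ℝ) → ℝ) :
    (Fin (n + 2) → ℝ) → Matrix (Fin (n + 2)) (Fin (n + 2)) ℝ :=
  kerrSchild (brinkmannFlat n) (brinkmannWave n) H

lemma two_le_val_iff {i : Fin (n + 2)} : 2 ≤ (i : ℕ) ↔ i ≠ 0 ∧ i ≠ 1 := by
  simp only [ne_eq, Fin.ext_iff, Fin.val_zero, Fin.val_one]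
  omega

lemma brinkmann_apply (x : Fin (n + 2) → ℝ) (i j : Fin (n + 2)) :
    brinkmann H x i j =
      if (i = 0 ∧ j = 1) ∨ (i = 1 ∧ j = 0) then 1
      else if i = 1 ∧ j = 1 then H x
      else if i = j ∧ 2 ≤ (i : ℕ) then 1
      else 0 := by
  have hflat : brinkmannFlat n i j = if j = Equiv.swap 0 1 i then 1 else 0 := by
    simp [brinkmannFlat, Matrix.swap, PEquiv.toMatrix_apply, eq_comm]
  rw [brinkmann, kerrSchild, Matrix.add_apply, hflat]
  by_cases hi0 : i = 0
  · simp [hi0, vecMulVec_apply]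
  by_cases hi1 : i = 1
  · by_cases hj : j = 0 <;> simp [hi1, hj, vecMulVec_apply, Pi.single_apply]
  · simp [Equiv.swap_apply_of_ne_of_ne hi0 hi1, hi0, hi1, two_le_val_iff, vecMulVec_apply,
      eq_comm]

lemma brinkmannFlat_inv : (brinkmannFlat n)⁻¹ = brinkmannFlat n :=
  inv_eq_right_inv (swap_mul_self 0 1)

lemma isUnit_det_brinkmannFlat : IsUnit (brinkmannFlat n).det :=
  isUnit_det_of_right_inverse (swap_mul_self 0 1)

lemma brinkmannWave_dotProduct_inv_mulVec (w : Fin (n + 2) → ℝ) :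
    brinkmannWave n ⬝ᵥ (brinkmannFlat n)⁻¹ *ᵥ w = w 0 := by
  rw [brinkmannFlat_inv, swap_mulVec, single_one_dotProduct, Function.comp_apply,
    Equiv.swap_apply_right]

lemma brinkmannWave_null :
    brinkmannWave n ⬝ᵥ (brinkmannFlat n)⁻¹ *ᵥ brinkmannWave n = 0 := by
  rw [brinkmannWave_dotProduct_inv_mulVec, brinkmannWave, Pi.single_eq_of_ne zero_ne_one]

lemma brinkmannWave_dotProduct_inv_mulVec_differential (hH : Differentiable ℝ H)
    (hv : ∀ x c, H (Function.update x 0 c) = H x) (x : Fin (n + 2) → ℝ) :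
    brinkmannWave n ⬝ᵥ (brinkmannFlat n)⁻¹ *ᵥ differential H x = 0 := by
  rw [brinkmannWave_dotProduct_inv_mulVec]
  exact pd_eq_zero_of_update_eq (hH x) (hv x)

lemma hessian_apply_zero (hH : ContDiff ℝ 2 H) (hv : ∀ x c, H (Function.update x 0 c) = H x)
    (x : Fin (n + 2) → ℝ) (i : Fin (n + 2)) : hessian H x i 0 = 0 := by
  rw [← brinkmannWave_dotProduct_inv_mulVec (hessian H x i)]
  exact dotProduct_inv_mulVec_hessian hH
    (brinkmannWave_dotProduct_inv_mulVec_differential (hH.differentiable (by simp)) hv) x i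

lemma trace_brinkmannFlat_inv_mul {h : Matrix (Fin (n + 2)) (Fin (n + 2)) ℝ} (hh : h.IsSymm)
    (h0 : ∀ i, h i 0 = 0) :
    trace ((brinkmannFlat n)⁻¹ * h) =
      ∑ i : Fin (n + 2), if 2 ≤ (i : ℕ) then h i i else 0 := by
  rw [brinkmannFlat_inv]
  refine Finset.sum_congr rfl fun i _ => ?_
  simp only [diag_apply, two_le_val_iff]
  split_ifs with hi
  · exact swap_mul_of_ne hi.1 hi.2 h
  · obtain rfl | rfl : i = 0 ∨ i = 1 := by tauto
    · rw [swap_mul_apply_left, h0]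
    · rw [swap_mul_apply_right, ← hh.apply, h0]

lemma Rm4_brinkmann (hH : ContDiff ℝ 2 H) (hv : ∀ x c, H (Function.update x 0 c) = H x)
    (a b c d : Fin (n + 2)) (x : Fin (n + 2) → ℝ) :
    Rm4 (brinkmann H) a b c d x = 1 / 2 *
      kulkarniNomizu (hessian H x) (vecMulVec (brinkmannWave n) (brinkmannWave n)) a b c d :=
  Rm4_kerrSchild isUnit_det_brinkmannFlat (isSymm_swap 0 1) brinkmannWave_null hH
    (brinkmannWave_dotProduct_inv_mulVec_differential (hH.differentiable (by simp)) hv) a b c d x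

lemma Ric_brinkmann (hH : ContDiff ℝ 2 H) (hv : ∀ x c, H (Function.update x 0 c) = H x)
    (j k : Fin (n + 2)) (x : Fin (n + 2) → ℝ) :
    Ric (brinkmann H) j k x =
      if j = 1 ∧ k = 1 then
        -(1 / 2) * ∑ i : Fin (n + 2), (if 2 ≤ (i : ℕ) then pd i (pd i H) x else 0)
      else 0 := by
  rw [Ric_kerrSchild isUnit_det_brinkmannFlat (isSymm_swap 0 1) brinkmannWave_null hH
    (brinkmannWave_dotProduct_inv_mulVec_differential (hH.differentiable (by simp)) hv),
    trace_brinkmannFlat_inv_mul (hessian_isSymm hH x) (hessian_apply_zero hH hv x)]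
  by_cases hj : j = 1 <;> by_cases hk : k = 1 <;> simp [hessian, hj, hk]

lemma kulkarniNomizu_brinkmannWave {h : Matrix (Fin (n + 2)) (Fin (n + 2)) ℝ}
    {i j : Fin (n + 2)} (hi : i ≠ 1) (hj : j ≠ 1) :
    kulkarniNomizu h (vecMulVec (brinkmannWave n) (brinkmannWave n)) i 1 1 j = -h i j := by
  simp [kulkarniNomizu, vecMulVec_apply, hi, hj]

lemma kulkarniNomizu_brinkmannWave_eq_zero {h : Matrix (Fin (n + 2)) (Fin (n + 2)) ℝ}
    (h0 : ∀ j, h 0 j = 0) {a b : Fin (n + 2)}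
    (hab : ¬ ((a = 1 ∧ 2 ≤ (b : ℕ)) ∨ (2 ≤ (a : ℕ) ∧ b = 1))) (c d : Fin (n + 2)) :
    kulkarniNomizu h (vecMulVec (brinkmannWave n) (brinkmannWave n)) a b c d = 0 := by
  rw [two_le_val_iff, two_le_val_iff] at hab
  by_cases ha : a = 1
  · obtain rfl | rfl : b = 0 ∨ b = 1 := by tauto
    · simp [kulkarniNomizu, vecMulVec_apply, h0]
    · simp only [kulkarniNomizu, ha]
      ring
  · by_cases hb : b = 1
    · obtain rfl : a = 0 := by tauto
      simp [kulkarniNomizu, vecMulVec_apply, h0]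
    · simp [kulkarniNomizu, vecMulVec_apply, ha, hb]

lemma Rm4_brinkmann_eq_zero (hH : ContDiff ℝ 2 H) (hv : ∀ x c, H (Function.update x 0 c) = H x)
    {a b c d : Fin (n + 2)}
    (habcd : ¬ (((a = 1 ∧ 2 ≤ (b : ℕ)) ∨ (2 ≤ (a : ℕ) ∧ b = 1)) ∧
      ((c = 1 ∧ 2 ≤ (d : ℕ)) ∨ (2 ≤ (c : ℕ) ∧ d = 1)))) (x : Fin (n + 2) → ℝ) :
    Rm4 (brinkmann H) a b c d x = 0 := by
  have hsymm := hessian_isSymm hH x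
  have h0 (j : Fin (n + 2)) : hessian H x 0 j = 0 := by
    rw [← hsymm.apply, hessian_apply_zero hH hv]
  rw [Rm4_brinkmann hH hv]
  rcases not_and_or.1 habcd with hab | hcd
  · rw [kulkarniNomizu_brinkmannWave_eq_zero h0 hab, mul_zero]
  · rw [kulkarniNomizu_pair_comm hsymm (transpose_vecMulVec _ _),
      kulkarniNomizu_brinkmannWave_eq_zero h0 hcd, mul_zero]

lemma Rm4_brinkmann_transverse (hH : ContDiff ℝ 2 H)
    (hv : ∀ x c, H (Function.update x 0 c) = H x) {i j : Fin (n + 2)} (hi : i ≠ 1) (hj : j ≠ 1)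
    (x : Fin (n + 2) → ℝ) : Rm4 (brinkmann H) i 1 1 j x = -(1 / 2) * pd i (pd j H) x := by
  rw [Rm4_brinkmann hH hv, kulkarniNomizu_brinkmannWave hi hj, mul_neg, neg_mul]
  rfl

end Brinkmann

theorem stmt_12_general (n : ℕ) (H : (Fin (n + 2) → ℝ) → ℝ) (hH : ContDiff ℝ 2 H)
    (hHv : ∀ (x : Fin (n + 2) → ℝ) (c : ℝ), H (Function.update x 0 c) = H x)
    (g : (Fin (n + 2) → ℝ) → Matrix (Fin (n + 2)) (Fin (n + 2)) ℝ)
    (hg : ∀ x (i j : Fin (n + 2)), g x i j =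
      if (i = 0 ∧ j = 1) ∨ (i = 1 ∧ j = 0) then 1
      else if i = 1 ∧ j = 1 then H x
      else if i = j ∧ 2 ≤ (i : ℕ) then 1
      else 0) :
    (∀ x : Fin (n + 2) → ℝ,
      (∀ i j : Fin (n + 2), 2 ≤ (i : ℕ) → 2 ≤ (j : ℕ) →
        Rm4 g i 1 1 j x = -(1 / 2) * pd i (pd j H) x) ∧
      (∀ a b c d : Fin (n + 2),
        ¬ (((a = 1 ∧ 2 ≤ (b : ℕ)) ∨ (2 ≤ (a : ℕ) ∧ b = 1)) ∧
            ((c = 1 ∧ 2 ≤ (d : ℕ)) ∨ (2 ≤ (c : ℕ) ∧ d = 1))) →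
        Rm4 g a b c d x = 0) ∧
      Ric g 1 1 x =
        -(1 / 2) * ∑ i : Fin (n + 2), (if 2 ≤ (i : ℕ) then pd i (pd i H) x else 0) ∧
      (∀ j k : Fin (n + 2), ¬ (j = 1 ∧ k = 1) → Ric g j k x = 0)) ∧
    ((∀ (x : Fin (n + 2) → ℝ) (j k : Fin (n + 2)), Ric g j k x = 0) ↔
      (∀ x : Fin (n + 2) → ℝ,
        (∑ i : Fin (n + 2), if 2 ≤ (i : ℕ) then pd i (pd i H) x else 0) = 0)) := by
  obtain rfl : g = brinkmann H := by
    ext x i j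
    rw [hg, brinkmann_apply]
  have hRic := Ric_brinkmann hH hHv
  refine ⟨fun x => ⟨fun i j hi hj => ?_, fun a b c d h => Rm4_brinkmann_eq_zero hH hHv h x, ?_,
    fun j k hjk => ?_⟩, fun h x => ?_, fun h x j k => ?_⟩
  · exact Rm4_brinkmann_transverse hH hHv (two_le_val_iff.1 hi).2 (two_le_val_iff.1 hj).2 x
  · rw [hRic, if_pos ⟨rfl, rfl⟩]
  · rw [hRic, if_neg hjk]
  · simpa [hRic] using h x 1 1
  · rw [hRic, h x, mul_zero, ite_self]

/-- Curvature of the pp-wave metric in Brinkmann coordinates `(v,u,x²,…,xⁿ)` (index `0 = v`,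
index `1 = u`): `Rm(∂ᵢ,∂ᵤ,∂ᵤ,∂ⱼ) = −(1/2)∂ᵢ∂ⱼH`, all components not obtained from these by the
curvature symmetries vanish, `Ric(∂ᵤ,∂ᵤ) = −(1/2)ΔH` with all other Ricci components zero; in
particular `g` is Ricci-flat iff `H` is harmonic in `x²,…,xⁿ`. -/
theorem stmt_12 (n : ℕ) (hn : 2 ≤ n)
    (H : (Fin (n+1) → ℝ) → ℝ) (hH : ContDiff ℝ (⊤ : ℕ∞) H)
    (hHv : ∀ (x : Fin (n+1) → ℝ) (c : ℝ), H (Function.update x 0 c) = H x)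
    (g : (Fin (n+1) → ℝ) → Matrix (Fin (n+1)) (Fin (n+1)) ℝ)
    (hg : ∀ x (i j : Fin (n+1)), g x i j =
      if (i = 0 ∧ j = 1) ∨ (i = 1 ∧ j = 0) then 1
      else if i = 1 ∧ j = 1 then H x
      else if i = j ∧ 2 ≤ (i : ℕ) then 1
      else 0) :
    (∀ x : Fin (n+1) → ℝ,
      (∀ i j : Fin (n+1), 2 ≤ (i : ℕ) → 2 ≤ (j : ℕ) →
        Rm4 g i 1 1 j x = -(1/2) * pd i (pd j H) x) ∧
      (∀ a b c d : Fin (n+1),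
        ¬ (((a = 1 ∧ 2 ≤ (b : ℕ)) ∨ (2 ≤ (a : ℕ) ∧ b = 1)) ∧
            ((c = 1 ∧ 2 ≤ (d : ℕ)) ∨ (2 ≤ (c : ℕ) ∧ d = 1))) →
        Rm4 g a b c d x = 0) ∧
      Ric g 1 1 x = -(1/2) * ∑ i : Fin (n+1), (if 2 ≤ (i : ℕ) then pd i (pd i H) x else 0) ∧
      (∀ j k : Fin (n+1), ¬ (j = 1 ∧ k = 1) → Ric g j k x = 0)) ∧
    ((∀ (x : Fin (n+1) → ℝ) (j k : Fin (n+1)), Ric g j k x = 0) ↔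
      (∀ x : Fin (n+1) → ℝ,
        (∑ i : Fin (n+1), if 2 ≤ (i : ℕ) then pd i (pd i H) x else 0) = 0)) := by
  obtain ⟨m, rfl⟩ := Nat.exists_eq_add_of_le' (one_le_two.trans hn)
  exact stmt_12_general m H (contDiff_infty.1 hH 2) hHv g hg
end

section
/- Let n ≥ 3 and let g be a smooth map from an open subset of ℝ^{n+1} (coordinates x⁰, x¹, …, xⁿ) to invertible symmetric (n+1)×(n+1) real matrices of null-coordinate form — g_{00} = 0, g_{01} = g_{10} = 1, g_{0i} = g_{i0} = 0 for 2 ≤ i ≤ n, with the block (g_{ij})_{2 ≤ i,j ≤ n} positive definite — and assume all components g_{αβ} are independent of x⁰. For fixed b, c ∈ ℝ, let ḡ_{b,c} be the Riemannian metric on the slice {x⁰ = b, x¹ = c}, given in the coordinates (x², …, xⁿ) by the matrix (g_{ij}(c, x², …, xⁿ))_{2 ≤ i,j ≤ n}. Then for all 2 ≤ i, j, k, l ≤ n and all points p = (b, c, x², …, xⁿ) in the domain, the coordinate curvature 4-tensor of the ambient metric g satisfies Rm_g(∂_i, ∂_j, ∂_k, ∂_l)(p) = Rm_{ḡ_{b,c}}(∂_i,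 ∂_j, ∂_k, ∂_l)(x², …, xⁿ), the coordinate curvature 4-tensor of the induced slice metric. -/
open Matrix

/-!
The vectors normal to a slice `{x⁰ = b, x¹ = c}` are spanned by the null vector `∂₀` and a vector of
the form `∂₁ + ⋯`, along which the second fundamental form has the component `Γ^1_{ij}`. Since
row `1` of `g⁻¹` is `(1, 0, …, 0)`, this component is `-½ ∂₀g_{ij} = 0`. So the second fundamental
form is a multiple of `∂₀`, and the quadratic correction in the Gauss equation vanishes.

In coordinates, the terms `p = 0` and `p = 1` drop out of the sums in `Rm_{ijkl}`, because
`Γ^p_{i0} = 0` for every `p ≥ 1` and `Γ^1_{ij} = 0`. The remaining Christoffel symbols are those of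
the slice, since the slice block of `g⁻¹` is the inverse of the slice block of `g`. They are
differentiable by Cramer's rule, so the chain rule along the slice identifies their tangential
derivatives too.
-/

lemma sum_univ_add_two {M : Type*} [AddCommMonoid M] {m : ℕ} (f : Fin (m + 2) → M) :
    ∑ a, f a = f 0 + f 1 + ∑ i : Fin m, f i.succ.succ := by
  rw [Fin.sum_univ_succ, Fin.sum_univ_succ, Fin.succ_zero_eq_one, ← add_assoc (f 0)]

section NullCoordinates

variable {m : ℕ} {R : Type*}

/-- The block of entries tangent to the slices `{x⁰ = b, x¹ = c}`. The slice direction `i : Fin m`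
is the ambient direction `i.succ.succ : Fin (m + 2)`. -/
def sliceBlock (A : Matrix (Fin (m + 2)) (Fin (m + 2)) R) : Matrix (Fin m) (Fin m) R :=
  A.submatrix (fun i => i.succ.succ) fun i => i.succ.succ

/-- The pointwise null-coordinate form: a symmetric matrix with zeroth row `(0, 1, 0, …, 0)`. -/
structure IsNullCoord [Zero R] [One R] (A : Matrix (Fin (m + 2)) (Fin (m + 2)) R) : Prop where
  isSymm : A.IsSymm
  zero_zero : A 0 0 = 0
  zero_one : A 0 1 = 1
  zero_slice (i : Fin m) : A 0 i.succ.succ = 0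

namespace IsNullCoord

section ZeroOne

variable [Zero R] [One R] {A B : Matrix (Fin (m + 2)) (Fin (m + 2)) R}

lemma one_zero (h : IsNullCoord A) : A 1 0 = 1 := by
  rw [h.isSymm.apply, h.zero_one]

lemma slice_zero (h : IsNullCoord A) (i : Fin m) : A i.succ.succ 0 = 0 := by
  rw [h.isSymm.apply, h.zero_slice]

lemma row_zero_eq (hA : IsNullCoord A) (hB : IsNullCoord B) : A 0 = B 0 := by
  ext a
  refine Fin.cases (by rw [hA.zero_zero, hB.zero_zero]) (Fin.cases ?_ fun i => ?_) a
  · rw [Fin.succ_zero_eq_one, hA.zero_one, hB.zero_one]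
  · rw [hA.zero_slice, hB.zero_slice]

end ZeroOne

section CommRing

variable [CommRing R] {A : Matrix (Fin (m + 2)) (Fin (m + 2)) R}

lemma det_eq_neg_det_sliceBlock (h : IsNullCoord A) : A.det = -(sliceBlock A).det := by
  have expand_row : A.det = -(A.submatrix Fin.succ (Fin.succAbove 1)).det := by
    rw [det_succ_row_zero, sum_univ_add_two]
    simp [h.zero_zero, h.zero_one, h.zero_slice]
  have expand_col : (A.submatrix Fin.succ (Fin.succAbove 1)).det = (sliceBlock A).det := by
    rw [det_succ_column_zero, Fin.sum_univ_succ]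
    simp [h.one_zero, h.slice_zero, sliceBlock, Function.comp_def]
  rw [expand_row, expand_col]

lemma isUnit_det (h : IsNullCoord A) (hA : IsUnit (sliceBlock A).det) : IsUnit A.det := by
  rw [h.det_eq_neg_det_sliceBlock]
  exact hA.neg

lemma inv_apply_one (h : IsNullCoord A) (hA : IsUnit (sliceBlock A).det) (a : Fin (m + 2)) :
    A⁻¹ a 1 = (1 : Matrix (Fin (m + 2)) (Fin (m + 2)) R) a 0 := by
  rw [← nonsing_inv_mul A (h.isUnit_det hA), mul_apply, sum_univ_add_two]
  simp [h.zero_zero, h.one_zero, h.slice_zero]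

lemma inv_one_apply (h : IsNullCoord A) (hA : IsUnit (sliceBlock A).det) (a : Fin (m + 2)) :
    A⁻¹ 1 a = (1 : Matrix (Fin (m + 2)) (Fin (m + 2)) R) 0 a := by
  rw [← mul_nonsing_inv A (h.isUnit_det hA), mul_apply, sum_univ_add_two]
  simp [h.zero_zero, h.zero_one, h.zero_slice]

lemma inv_slice_one (h : IsNullCoord A) (hA : IsUnit (sliceBlock A).det) (i : Fin m) :
    A⁻¹ i.succ.succ 1 = 0 := by
  rw [h.inv_apply_one hA, one_apply_ne (Fin.succ_ne_zero _)]

lemma inv_sliceBlock (h : IsNullCoord A) (hA : IsUnit (sliceBlock A).det) :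
    (sliceBlock A)⁻¹ = sliceBlock A⁻¹ := by
  refine inv_eq_left_inv ?_
  ext i j
  have inv_mul_apply : (A⁻¹ * A) i.succ.succ j.succ.succ = (sliceBlock A⁻¹ * sliceBlock A) i j := by
    rw [mul_apply, sum_univ_add_two, h.zero_slice, h.inv_slice_one hA, mul_zero, zero_mul, zero_add,
      zero_add]
    rfl
  rw [← inv_mul_apply, nonsing_inv_mul A (h.isUnit_det hA)]
  simp [one_apply]

end CommRing

end IsNullCoord

end NullCoordinates

section Differentiability

variable {𝕜 E ι : Type*} [NontriviallyNormedField 𝕜] [NormedAddCommGroup E] [NormedSpace 𝕜 E]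
  [Fintype ι] [DecidableEq ι] {M : E → Matrix ι ι 𝕜} {x : E}

lemma differentiableAt_matrix_det (hM : ∀ i j, DifferentiableAt 𝕜 (fun y => M y i j) x) :
    DifferentiableAt 𝕜 (fun y => (M y).det) x := by
  simp only [det_apply']
  fun_prop

lemma differentiableAt_matrix_adjugate (hM : ∀ i j, DifferentiableAt 𝕜 (fun y => M y i j) x)
    (i j : ι) : DifferentiableAt 𝕜 (fun y => (M y).adjugate i j) x := by
  simp only [adjugate_apply]
  refine differentiableAt_matrix_det fun k l => ?_
  obtain rfl | hk := eq_or_ne k j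
  · simp only [updateRow_self, differentiableAt_const]
  · simpa only [updateRow_ne hk] using hM k l

lemma differentiableAt_matrix_inv (hM : ∀ i j, DifferentiableAt 𝕜 (fun y => M y i j) x)
    (hdet : (M x).det ≠ 0) (i j : ι) : DifferentiableAt 𝕜 (fun y => (M y)⁻¹ i j) x := by
  simp only [inv_def, Matrix.smul_apply, Ring.inverse_eq_inv', smul_eq_mul]
  exact ((differentiableAt_matrix_det hM).inv hdet).mul (differentiableAt_matrix_adjugate hM i j)

end Differentiability

section Coordinates

open Topology

variable {m : ℕ} {f : (Fin m → ℝ) → ℝ} {g : (Fin m → ℝ) → Matrix (Fin m) (Fin m) ℝ}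
  {x : Fin m → ℝ}

lemma pd_congr {f' : (Fin m → ℝ) → ℝ} (hf : f =ᶠ[𝓝 x] f') (a : Fin m) : pd a f x = pd a f' x := by
  rw [pd, pd, hf.fderiv_eq]

lemma pd_eq_zero_of_eventuallyEq_const {r : ℝ} (hf : f =ᶠ[𝓝 x] fun _ => r) (a : Fin m) :
    pd a f x = 0 := by
  rw [pd_congr hf, pd, fderiv_fun_const, Pi.zero_apply, _root_.zero_apply]

lemma differentiableAt_pd (hf : ContDiffAt ℝ 2 f x) (a : Fin m) :
    DifferentiableAt ℝ (pd a f) x :=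
  ((hf.fderiv_right (m := 1) (by norm_num)).differentiableAt one_ne_zero).clm_apply
    (differentiableAt_const _)

lemma differentiableAt_chr (hg : ∀ i j, ContDiffAt ℝ 2 (fun y => g y i j) x)
    (hdet : (g x).det ≠ 0) (k i j : Fin m) : DifferentiableAt ℝ (Chr g k i j) x := by
  have diff_inv := differentiableAt_matrix_inv
    (fun i j => (hg i j).differentiableAt two_ne_zero) hdet
  have diff_pd (i j k) := differentiableAt_pd (hg i j) k
  refine (DifferentiableAt.fun_sum fun l _ => ?_).const_mul _
  exact (diff_inv k l).mul (((diff_pd j l i).add (diff_pd i l j)).sub (diff_pd i j l))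

/-- The slice `{x⁰ = b, x¹ = c}`, parametrised by the remaining coordinates. -/
def slice (b c : ℝ) (z : Fin m → ℝ) : Fin (m + 2) → ℝ :=
  Fin.cons b (Fin.cons c z : Fin (m + 1) → ℝ)

lemma eq_slice {v : Fin (m + 2) → ℝ} {b c : ℝ} {z : Fin m → ℝ} (hb : v 0 = b) (hc : v 1 = c)
    (hz : ∀ i : Fin m, v i.succ.succ = z i) : v = slice b c z :=
  funext <| Fin.cases hb <| Fin.cases hc hz

lemma differentiable_slice (b c : ℝ) :
    Differentiable ℝ (slice b c : (Fin m → ℝ) → Fin (m + 2) → ℝ) := by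
  refine differentiable_pi.2 (Fin.cases ?_ (Fin.cases ?_ fun i => ?_))
  · exact differentiable_const b
  · exact differentiable_const c
  · exact differentiable_apply i

lemma slice_add_smul_single (b c t : ℝ) (z : Fin m → ℝ) (i : Fin m) :
    slice b c (z + t • Pi.single i 1) = slice b c z + t • Pi.single i.succ.succ 1 := by
  refine (eq_slice ?_ ?_ fun j => ?_).symm <;> simp [slice, Pi.single_apply, Fin.ext_iff]

lemma pd_comp_slice {f : (Fin (m + 2) → ℝ) → ℝ} {b c : ℝ} {z : Fin m → ℝ}
    (hf : DifferentiableAt ℝ f (slice b c z)) (i : Fin m) :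
    pd i (fun w => f (slice b c w)) z = pd i.succ.succ f (slice b c z) := by
  have hcomp : DifferentiableAt ℝ (fun w => f (slice b c w)) z :=
    hf.comp z (differentiable_slice b c z)
  rw [pd, pd, ← hcomp.lineDeriv_eq_fderiv, ← hf.lineDeriv_eq_fderiv]
  simp only [lineDeriv, slice_add_smul_single]

end Coordinates

/-- A Kundt metric on the open set `U`, in null coordinates: its slices are nondegenerate, of any
signature, and the components tangent to them do not depend on `x⁰`. Brinkmann metrics are the case
where no component depends on `x⁰`. -/
structure IsKundtOn {m : ℕ} (g : (Fin (m + 2) → ℝ) → Matrix (Fin (m + 2)) (Fin (m + 2)) ℝ)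
    (U : Set (Fin (m + 2) → ℝ)) : Prop where
  isOpen : IsOpen U
  contDiffOn (a b : Fin (m + 2)) : ContDiffOn ℝ 2 (fun y => g y a b) U
  isNullCoord : ∀ x ∈ U, IsNullCoord (g x)
  det_sliceBlock_ne_zero : ∀ x ∈ U, (sliceBlock (g x)).det ≠ 0
  pd_zero_slice : ∀ x ∈ U, ∀ i j : Fin m, pd 0 (fun y => g y i.succ.succ j.succ.succ) x = 0

/-- The metric induced on the slice `{x⁰ = b, x¹ = c}`. -/
def sliceMetric {m : ℕ} (g : (Fin (m + 2) → ℝ) → Matrix (Fin (m + 2)) (Fin (m + 2)) ℝ) (b c : ℝ)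
    (z : Fin m → ℝ) : Matrix (Fin m) (Fin m) ℝ :=
  sliceBlock (g (slice b c z))

namespace IsKundtOn

open Topology

variable {m : ℕ} {U : Set (Fin (m + 2) → ℝ)}
  {g : (Fin (m + 2) → ℝ) → Matrix (Fin (m + 2)) (Fin (m + 2)) ℝ} {x : Fin (m + 2) → ℝ}
  {b c : ℝ} {z : Fin m → ℝ}

lemma isUnit_det_sliceBlock (h : IsKundtOn g U) (hx : x ∈ U) : IsUnit (sliceBlock (g x)).det :=
  (h.det_sliceBlock_ne_zero x hx).isUnit

lemma contDiffAt (h : IsKundtOn g U) (hx : x ∈ U) (a b : Fin (m + 2)) :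
    ContDiffAt ℝ 2 (fun y => g y a b) x :=
  (h.contDiffOn a b).contDiffAt (h.isOpen.mem_nhds hx)

lemma pd_row_zero (h : IsKundtOn g U) (hx : x ∈ U) (a b : Fin (m + 2)) :
    pd a (fun y => g y 0 b) x = 0 := by
  refine pd_eq_zero_of_eventuallyEq_const (r := g x 0 b) ?_ a
  filter_upwards [h.isOpen.mem_nhds hx] with y hy
  rw [(h.isNullCoord y hy).row_zero_eq (h.isNullCoord x hx)]

lemma pd_col_zero (h : IsKundtOn g U) (hx : x ∈ U) (a b : Fin (m + 2)) :
    pd a (fun y => g y b 0) x = 0 := by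
  rw [← h.pd_row_zero hx a b]
  refine pd_congr ?_ a
  filter_upwards [h.isOpen.mem_nhds hx] with y hy
  exact (h.isNullCoord y hy).isSymm.apply 0 b

lemma chr_one_eq (h : IsKundtOn g U) (hx : x ∈ U) (a b : Fin (m + 2)) :
    Chr g 1 a b x = -(1 / 2) * pd 0 (fun y => g y a b) x := by
  simp [Chr, (h.isNullCoord x hx).inv_one_apply (h.isUnit_det_sliceBlock hx), one_apply,
    h.pd_col_zero hx]

lemma chr_one_zero (h : IsKundtOn g U) (hx : x ∈ U) (a : Fin (m + 2)) : Chr g 1 a 0 x = 0 := by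
  rw [h.chr_one_eq hx, h.pd_col_zero hx, mul_zero]

lemma chr_one_slice (h : IsKundtOn g U) (hx : x ∈ U) (i j : Fin m) :
    Chr g 1 i.succ.succ j.succ.succ x = 0 := by
  rw [h.chr_one_eq hx, h.pd_zero_slice x hx, mul_zero]

lemma chr_slice_zero (h : IsKundtOn g U) (hx : x ∈ U) (k i : Fin m) :
    Chr g k.succ.succ i.succ.succ 0 x = 0 := by
  rw [Chr, sum_univ_add_two, (h.isNullCoord x hx).inv_slice_one (h.isUnit_det_sliceBlock hx)]
  simp [h.pd_col_zero hx, h.pd_row_zero hx, h.pd_zero_slice x hx]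

lemma pd_sliceMetric (h : IsKundtOn g U) (hz : slice b c z ∈ U) (i j k : Fin m) :
    pd k (fun w => sliceMetric g b c w i j) z =
      pd k.succ.succ (fun y => g y i.succ.succ j.succ.succ) (slice b c z) :=
  pd_comp_slice (f := fun y => g y i.succ.succ j.succ.succ)
    ((h.contDiffAt hz _ _).differentiableAt two_ne_zero) k

lemma inv_sliceMetric (h : IsKundtOn g U) (hz : slice b c z ∈ U) (k l : Fin m) :
    (sliceMetric g b c z)⁻¹ k l = (g (slice b c z))⁻¹ k.succ.succ l.succ.succ := by
  rw [sliceMetric, (h.isNullCoord _ hz).inv_sliceBlock (h.isUnit_det_sliceBlock hz)]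
  rfl

lemma chr_sliceMetric (h : IsKundtOn g U) (hz : slice b c z ∈ U) (k i j : Fin m) :
    Chr (sliceMetric g b c) k i j z = Chr g k.succ.succ i.succ.succ j.succ.succ (slice b c z) := by
  simp [Chr, sum_univ_add_two, h.inv_sliceMetric hz, h.pd_sliceMetric hz, h.pd_col_zero hz,
    h.pd_zero_slice _ hz, (h.isNullCoord _ hz).inv_slice_one (h.isUnit_det_sliceBlock hz)]

lemma pd_chr_sliceMetric (h : IsKundtOn g U) (hz : slice b c z ∈ U) (a k i j : Fin m) :
    pd a (Chr (sliceMetric g b c) k i j) z =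
      pd a.succ.succ (Chr g k.succ.succ i.succ.succ j.succ.succ) (slice b c z) := by
  have hdet := (h.isNullCoord _ hz).isUnit_det (h.isUnit_det_sliceBlock hz)
  rw [← pd_comp_slice (differentiableAt_chr (h.contDiffAt hz) hdet.ne_zero _ _ _)]
  refine pd_congr ?_ a
  filter_upwards [(differentiable_slice b c).continuous.continuousAt (h.isOpen.mem_nhds hz)]
    with w hw
  exact h.chr_sliceMetric hw k i j

lemma riemUp_one_slice (h : IsKundtOn g U) (hx : x ∈ U) (i j k : Fin m) :
    RiemUp g i.succ.succ j.succ.succ k.succ.succ 1 x = 0 := by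
  have pd_chr (a : Fin (m + 2)) (p q : Fin m) : pd a (Chr g 1 p.succ.succ q.succ.succ) x = 0 :=
    pd_eq_zero_of_eventuallyEq_const
      (Filter.eventually_of_mem (h.isOpen.mem_nhds hx) fun _ hy => h.chr_one_slice hy p q) a
  simp [RiemUp, sum_univ_add_two, pd_chr, h.chr_one_zero hx, h.chr_one_slice hx]

lemma riemUp_sliceMetric (h : IsKundtOn g U) (hz : slice b c z ∈ U) (i j k l : Fin m) :
    RiemUp (sliceMetric g b c) i j k l z =
      RiemUp g i.succ.succ j.succ.succ k.succ.succ l.succ.succ (slice b c z) := by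
  simp [RiemUp, sum_univ_add_two, h.chr_slice_zero hz, h.chr_one_slice hz, h.chr_sliceMetric hz,
    h.pd_chr_sliceMetric hz]

theorem rm4_sliceMetric (h : IsKundtOn g U) (hz : slice b c z ∈ U) (i j k l : Fin m) :
    Rm4 (sliceMetric g b c) i j k l z =
      Rm4 g i.succ.succ j.succ.succ k.succ.succ l.succ.succ (slice b c z) := by
  simp [Rm4, sum_univ_add_two, (h.isNullCoord _ hz).slice_zero, h.riemUp_one_slice hz,
    h.riemUp_sliceMetric hz, sliceMetric, sliceBlock]

end IsKundtOn

/-- The hypotheses say that `g` is a Kundt metric (`IsKundtOn`). -/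
theorem stmt_15_general (n : ℕ) (U : Set (Fin (n + 1) → ℝ)) (hU : IsOpen U)
    (g : (Fin (n + 1) → ℝ) → Matrix (Fin (n + 1)) (Fin (n + 1)) ℝ)
    (hg_contDiffOn : ∀ a b, ContDiffOn ℝ 2 (fun y => g y a b) U)
    (hg_symm : ∀ x ∈ U, (g x).IsSymm)
    (hg00 : ∀ x ∈ U, g x 0 0 = 0)
    (hg01 : ∀ x ∈ U, g x 0 1 = 1)
    (hg0i : ∀ x ∈ U, ∀ i : Fin (n + 1), 2 ≤ (i : ℕ) → g x 0 i = 0)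
    (ι : Fin (n - 1) → Fin (n + 1))
    (hι : ∀ i, (ι i : ℕ) = (i : ℕ) + 2)
    (hg_det : ∀ x ∈ U, ((g x).submatrix ι ι).det ≠ 0)
    (hg_indep : ∀ x ∈ U, ∀ i j, pd 0 (fun y => g y (ι i) (ι j)) x = 0)
    (emb : ℝ → ℝ → (Fin (n - 1) → ℝ) → (Fin (n + 1) → ℝ))
    (hemb0 : ∀ b c z, emb b c z 0 = b)
    (hemb1 : ∀ b c z, emb b c z 1 = c)
    (hembι : ∀ b c z i, emb b c z (ι i) = z i)
    (gbar : ℝ → ℝ → (Fin (n - 1) → ℝ) → Matrix (Fin (n - 1)) (Fin (n - 1)) ℝ)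
    (hgbar : ∀ b c z i j, gbar b c z i j = g (emb b c z) (ι i) (ι j))
    (b c : ℝ) (z : Fin (n - 1) → ℝ) (hz : emb b c z ∈ U) (i j k l : Fin (n - 1)) :
    Rm4 g (ι i) (ι j) (ι k) (ι l) (emb b c z) = Rm4 (gbar b c) i j k l z := by
  obtain _ | m := n
  · exact i.elim0
  -- `m + 1 - 1` is definitionally `m`.
  change Fin m → Fin (m + 2) at ι
  obtain rfl : ι = fun i => i.succ.succ := funext fun i => Fin.ext (hι i)
  have hg : IsKundtOn (m := m) g U :=
    { isOpen := hU
      contDiffOn := hg_contDiffOn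
      isNullCoord := fun x hx =>
        ⟨hg_symm x hx, hg00 x hx, hg01 x hx, fun i => hg0i x hx _ (by simp)⟩
      det_sliceBlock_ne_zero := hg_det
      pd_zero_slice := hg_indep }
  have emb_eq (b c : ℝ) (z : Fin m → ℝ) : emb b c z = slice b c z :=
    eq_slice (hemb0 b c z) (hemb1 b c z) (hembι b c z)
  have gbar_eq : gbar b c = sliceMetric (m := m) g b c := by
    ext z i j
    rw [hgbar, emb_eq]
    rfl
  rw [emb_eq] at hz ⊢
  rw [gbar_eq]
  exact (hg.rm4_sliceMetric hz i j k l).symm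

/-- In a Brinkmann spacetime in null coordinates (all metric components independent of `x⁰`),
the coordinate curvature 4-tensor of the ambient metric, evaluated on the slice directions
`∂₂,…,∂ₙ`, equals the coordinate curvature 4-tensor of the induced Riemannian metric on each
codimension-2 slice `{x⁰ = b, x¹ = c}`. -/
theorem stmt_15 (n : ℕ) (hn : 3 ≤ n)
    (U : Set (Fin (n+1) → ℝ)) (hU : IsOpen U)
    (g : (Fin (n+1) → ℝ) → Matrix (Fin (n+1)) (Fin (n+1)) ℝ)
    (hg_smooth : ∀ i j : Fin (n+1), ContDiffOn ℝ (⊤ : ℕ∞) (fun y => g y i j) U)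
    (hg_symm : ∀ x ∈ U, (g x).IsSymm)
    (hg00 : ∀ x ∈ U, g x 0 0 = 0)
    (hg01 : ∀ x ∈ U, g x 0 1 = 1)
    (hg0i : ∀ x ∈ U, ∀ i : Fin (n+1), 2 ≤ (i : ℕ) → g x 0 i = 0)
    (ι : Fin (n-1) → Fin (n+1))
    (hι : ∀ i : Fin (n-1), (ι i : ℕ) = (i : ℕ) + 2)
    (hg_pos : ∀ x ∈ U, ((g x).submatrix ι ι).PosDef)
    (hg_indep : ∀ x ∈ U, ∀ a b : Fin (n+1), pd 0 (fun y => g y a b) x = 0)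
    (emb : ℝ → ℝ → (Fin (n-1) → ℝ) → (Fin (n+1) → ℝ))
    (hemb0 : ∀ b c z, emb b c z 0 = b)
    (hemb1 : ∀ b c z, emb b c z 1 = c)
    (hembι : ∀ b c z i, emb b c z (ι i) = z i)
    (gbar : ℝ → ℝ → (Fin (n-1) → ℝ) → Matrix (Fin (n-1)) (Fin (n-1)) ℝ)
    (hgbar : ∀ b c z (i j : Fin (n-1)), gbar b c z i j = g (emb b c z) (ι i) (ι j)) :
    ∀ (b c : ℝ) (z : Fin (n-1) → ℝ), emb b c z ∈ U →
      ∀ i j k l : Fin (n-1),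
        Rm4 g (ι i) (ι j) (ι k) (ι l) (emb b c z) = Rm4 (gbar b c) i j k l z :=
  stmt_15_general n U hU g (fun a b => (hg_smooth a b).of_le (WithTop.coe_le_coe.2 le_top)) hg_symm
    hg00 hg01 hg0i ι hι (fun x hx => (hg_pos x hx).det_pos.ne')
    (fun x hx i j => hg_indep x hx (ι i) (ι j)) emb hemb0 hemb1 hembι gbar hgbar
end

section
/- Let n ≥ 2 and on ℝ^{n+1} with coordinates (r, t, x², …, xⁿ) let h be the Lorentzian plane wave metric represented by the matrix field h_{rt} = h_{tr} = 1, h_{ii} = e^{√2 r} for 2 ≤ i ≤ n, all other entries zero (i.e. h = 2 dr dt + Σ_i e^{√2 r}(dxⁱ)²). Then the coordinate Ricci tensor of h satisfies Ric_h = −((n−1)/2) dr ⊗ dr, i.e. (Ric_h)_{rr} = −(n−1)/2 and all other components of Ric_h vanish. -/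
open Matrix

/-!
The metric is a Rosen plane wave `2 dr dt + Σ γᵢⱼ(r) dxⁱ dxʲ`. All its coefficients depend on `r`
only and its inverse swaps `r` and `t`, so `Γ^r = 0`, no symbol has `t` as a lower index, and the
transverse symbols `Γ^k_{ij}` are nonzero only when exactly one of `i`, `j` is `r`, in which case
they are the entries of `B = ½ γ⁻¹ γ'`. The only surviving contractions give the Raychaudhuri
equation `Ric = -tr (B' + B²) dr²`. For `γ = e^{cr} 1` the matrix `B` is the constant `(c/2) 1`.
-/

section PartialDerivative

variable {m : ℕ}

lemma pd_comp_apply (a b : Fin m) (φ : ℝ → ℝ) (x : Fin m → ℝ) :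
    pd a (fun y => φ (y b)) x = if a = b then deriv φ (x b) else 0 := by
  by_cases hφ : DifferentiableAt ℝ φ (x b)
  · have hcomp : HasFDerivAt (fun y : Fin m → ℝ => φ (y b))
        (deriv φ (x b) • ContinuousLinearMap.proj b) x :=
      (hφ.hasDerivAt.comp_hasFDerivAt x (hasFDerivAt_apply (𝕜 := ℝ) b x) :)
    simp [pd, hcomp.fderiv, Pi.single_apply, eq_comm]
  · -- Restricting to the coordinate line through `x` shows that both sides have the junk value `0`.
    have hcomp : ¬ DifferentiableAt ℝ (fun y : Fin m → ℝ => φ (y b)) x := by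
      refine fun hdiff => hφ ?_
      have hline : DifferentiableAt ℝ (fun s => Function.update x b s) (x b) :=
        (hasDerivAt_update x b (x b)).differentiableAt
      rw [← Function.update_eq_self b x] at hdiff
      simpa [Function.comp_def] using hdiff.comp (x b) hline
    simp [pd, fderiv_zero_of_not_differentiableAt hcomp, deriv_zero_of_not_differentiableAt hφ]

end PartialDerivative

section HyperbolicSum

variable {m : ℕ} {R : Type*}

section Entries

variable [Zero R] [One R]

/-- The orthogonal sum `2 dr dt ⊕ A` of the hyperbolic plane, on the coordinates `0` and `1`, and
the bilinear form with matrix `A`, on the remaining coordinates `i.succ.succ`. -/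
def hyperbolicSum (A : Matrix (Fin m) (Fin m) R) : Matrix (Fin (m + 2)) (Fin (m + 2)) R :=
  of (vecCons (Pi.single 1 1) (vecCons (Pi.single 0 1) fun i => vecCons 0 (vecCons 0 (A i))))

variable (A : Matrix (Fin m) (Fin m) R)

lemma hyperbolicSum_zero_left (j : Fin (m + 2)) :
    hyperbolicSum A 0 j = if j = 1 then 1 else 0 := by
  simp [hyperbolicSum, Pi.single_apply]

lemma hyperbolicSum_one_left (j : Fin (m + 2)) :
    hyperbolicSum A 1 j = if j = 0 then 1 else 0 := by
  simp [hyperbolicSum, Pi.single_apply]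

lemma hyperbolicSum_zero_right (i : Fin (m + 2)) :
    hyperbolicSum A i 0 = if i = 1 then 1 else 0 := by
  refine Fin.cases ?_ (Fin.cases ?_ fun i => ?_) i <;>
    simp [hyperbolicSum, Fin.succ_succ_ne_one]

lemma hyperbolicSum_one_right (i : Fin (m + 2)) :
    hyperbolicSum A i 1 = if i = 0 then 1 else 0 := by
  refine Fin.cases ?_ (Fin.cases ?_ fun i => ?_) i <;> simp [hyperbolicSum]

lemma hyperbolicSum_succ_succ (i j : Fin m) :
    hyperbolicSum A i.succ.succ j.succ.succ = A i j := by
  simp [hyperbolicSum]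

end Entries

section Sums

variable [NonAssocSemiring R] (A : Matrix (Fin m) (Fin m) R)

lemma sum_hyperbolicSum_zero_mul (F : Fin (m + 2) → R) :
    ∑ l, hyperbolicSum A 0 l * F l = F 1 := by
  simp [hyperbolicSum_zero_left]

lemma sum_hyperbolicSum_one_mul (F : Fin (m + 2) → R) :
    ∑ l, hyperbolicSum A 1 l * F l = F 0 := by
  simp [hyperbolicSum_one_left]

lemma sum_hyperbolicSum_succ_succ_mul (k : Fin m) (F : Fin (m + 2) → R) :
    ∑ l, hyperbolicSum A k.succ.succ l * F l = ∑ l, A k l * F l.succ.succ := by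
  simp [Fin.sum_univ_succ (n := m + 1), Fin.sum_univ_succ (n := m), hyperbolicSum]

end Sums

lemma inv_hyperbolicSum [CommRing R] {A : Matrix (Fin m) (Fin m) R} (hA : IsUnit A) :
    (hyperbolicSum A)⁻¹ = hyperbolicSum A⁻¹ := by
  refine inv_eq_left_inv (ext fun i j => ?_)
  rw [mul_apply]
  refine Fin.cases ?_ (Fin.cases ?_ fun i => ?_) i
  · rw [sum_hyperbolicSum_zero_mul, hyperbolicSum_one_left, one_apply]
    simp only [eq_comm]
  · rw [Fin.succ_zero_eq_one, sum_hyperbolicSum_one_mul, hyperbolicSum_zero_left, one_apply]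
    simp only [eq_comm]
  · rw [sum_hyperbolicSum_succ_succ_mul]
    refine Fin.cases ?_ (Fin.cases ?_ fun j => ?_) j
    · simp [hyperbolicSum_zero_right, Fin.succ_succ_ne_one]
    · simp [hyperbolicSum_one_right, one_apply, Fin.succ_succ_ne_one]
    · simp only [hyperbolicSum_succ_succ]
      rw [← mul_apply, nonsing_inv_mul A ((isUnit_iff_isUnit_det A).mp hA)]
      simp [one_apply]

lemma hyperbolicSum_smul_one_apply [Semiring R] (a : R) (i j : Fin (m + 2)) :
    hyperbolicSum (a • (1 : Matrix (Fin m) (Fin m) R)) i j =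
      if (i = 0 ∧ j = 1) ∨ (i = 1 ∧ j = 0) then 1
      else if i = j ∧ 2 ≤ (i : ℕ) then a else 0 := by
  refine Fin.cases ?_ (Fin.cases ?_ fun i => ?_) i
  · simp [hyperbolicSum_zero_left]
  · simp [hyperbolicSum_one_left]
  · refine Fin.cases ?_ (Fin.cases ?_ fun j => ?_) j
    · simp [hyperbolicSum_zero_right, Fin.succ_succ_ne_one]
    · simp [hyperbolicSum_one_right, Fin.succ_succ_ne_one]
    · simp [hyperbolicSum_succ_succ, one_apply, Fin.succ_succ_ne_one]

end HyperbolicSum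

section Rosen

variable {m : ℕ}

/-- The plane wave metric `2 dr dt + Σ γᵢⱼ(r) dxⁱ dxʲ` in Rosen coordinates, `r` being the
coordinate `0` and `t` the coordinate `1`. -/
def rosenMetric (γ : ℝ → Matrix (Fin m) (Fin m) ℝ) (x : Fin (m + 2) → ℝ) :
    Matrix (Fin (m + 2)) (Fin (m + 2)) ℝ :=
  hyperbolicSum (γ (x 0))

/-- The entrywise derivative of a curve of matrices, with value `0` at those entries that are not
differentiable. -/
noncomputable def entrywiseDeriv (A : ℝ → Matrix (Fin m) (Fin m) ℝ) (r : ℝ) :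
    Matrix (Fin m) (Fin m) ℝ :=
  of fun i j => deriv (fun s => A s i j) r

/-- The optical matrix `B = ½ γ⁻¹ γ'` of the null geodesic congruence generated by `∂_r` in the
Rosen metric of `γ`; its trace is the expansion of the congruence. -/
noncomputable def opticalMatrix (γ : ℝ → Matrix (Fin m) (Fin m) ℝ) (r : ℝ) :
    Matrix (Fin m) (Fin m) ℝ :=
  (1 / 2 : ℝ) • ((γ r)⁻¹ * entrywiseDeriv γ r)

variable {γ : ℝ → Matrix (Fin m) (Fin m) ℝ}

lemma pd_rosenMetric (a i j : Fin (m + 2)) (x : Fin (m + 2) → ℝ) :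
    pd a (fun y => rosenMetric γ y i j) x =
      if a = 0 then deriv (fun r => hyperbolicSum (γ r) i j) (x 0) else 0 :=
  pd_comp_apply a 0 (fun r => hyperbolicSum (γ r) i j) x

variable {x : Fin (m + 2) → ℝ}

lemma chr_rosenMetric_zero (hx : IsUnit (γ (x 0))) (i j : Fin (m + 2)) :
    Chr (rosenMetric γ) 0 i j x = 0 := by
  rw [Chr, rosenMetric, inv_hyperbolicSum hx, sum_hyperbolicSum_zero_mul]
  simp [pd_rosenMetric, hyperbolicSum_one_right]

lemma chr_rosenMetric_one (hx : IsUnit (γ (x 0))) (i j : Fin (m + 2)) :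
    Chr (rosenMetric γ) 1 i j x =
      -(1 / 2) * deriv (fun r => hyperbolicSum (γ r) i j) (x 0) := by
  rw [Chr, rosenMetric, inv_hyperbolicSum hx, sum_hyperbolicSum_one_mul]
  simp [pd_rosenMetric, hyperbolicSum_zero_right]

lemma chr_rosenMetric_succ_succ (hx : IsUnit (γ (x 0))) (k : Fin m) (i j : Fin (m + 2)) :
    Chr (rosenMetric γ) k.succ.succ i j x =
      1 / 2 * ∑ l, (γ (x 0))⁻¹ k l *
        ((if i = 0 then deriv (fun r => hyperbolicSum (γ r) j l.succ.succ) (x 0) else 0) +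
          if j = 0 then deriv (fun r => hyperbolicSum (γ r) i l.succ.succ) (x 0) else 0) := by
  rw [Chr, rosenMetric, inv_hyperbolicSum hx, sum_hyperbolicSum_succ_succ_mul]
  simp [pd_rosenMetric]

lemma chr_rosenMetric_one_left (hx : IsUnit (γ (x 0))) (k j : Fin (m + 2)) :
    Chr (rosenMetric γ) k 1 j x = 0 := by
  refine Fin.cases ?_ (Fin.cases ?_ fun k => ?_) k
  · exact chr_rosenMetric_zero hx 1 j
  · simp [chr_rosenMetric_one hx, hyperbolicSum_one_left]
  · simp [chr_rosenMetric_succ_succ hx, hyperbolicSum_one_left]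

lemma chr_rosenMetric_one_right (hx : IsUnit (γ (x 0))) (k i : Fin (m + 2)) :
    Chr (rosenMetric γ) k i 1 x = 0 := by
  refine Fin.cases ?_ (Fin.cases ?_ fun k => ?_) k
  · exact chr_rosenMetric_zero hx i 1
  · simp [chr_rosenMetric_one hx, hyperbolicSum_one_right]
  · simp [chr_rosenMetric_succ_succ hx, hyperbolicSum_one_left]

lemma chr_rosenMetric_succ_succ_right (hsymm : ∀ r, (γ r).IsSymm) (hx : IsUnit (γ (x 0)))
    (k p : Fin m) (i : Fin (m + 2)) :
    Chr (rosenMetric γ) k.succ.succ i p.succ.succ x =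
      if i = 0 then opticalMatrix γ (x 0) k p else 0 := by
  simp [chr_rosenMetric_succ_succ hx, hyperbolicSum_succ_succ, opticalMatrix, entrywiseDeriv,
    mul_apply, (hsymm _).apply p]

lemma chr_rosenMetric_succ_succ_left (hsymm : ∀ r, (γ r).IsSymm) (hx : IsUnit (γ (x 0)))
    (k p : Fin m) (j : Fin (m + 2)) :
    Chr (rosenMetric γ) k.succ.succ p.succ.succ j x =
      if j = 0 then opticalMatrix γ (x 0) k p else 0 := by
  rw [← chr_rosenMetric_succ_succ_right hsymm hx, chr_rosenMetric_succ_succ hx,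
    chr_rosenMetric_succ_succ hx]
  simp only [add_comm]

lemma pd_chr_rosenMetric_of_ne_zero {a : Fin (m + 2)} (ha : a ≠ 0) (k i j : Fin (m + 2)) :
    pd a (Chr (rosenMetric γ) k i j) x = 0 := by
  have hchr : Chr (rosenMetric γ) k i j = fun y => Chr (rosenMetric γ) k i j fun _ => y 0 := by
    ext y
    simp only [Chr, pd_rosenMetric]
    rfl
  rw [hchr, pd_comp_apply a 0 (fun r => Chr (rosenMetric γ) k i j fun _ => r), if_neg ha]

lemma riemUp_rosenMetric_zero (hγ : ∀ r, IsUnit (γ r)) (i j k : Fin (m + 2)) :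
    RiemUp (rosenMetric γ) i j k 0 x = 0 := by
  have hchr (i j : Fin (m + 2)) : Chr (rosenMetric γ) 0 i j = fun _ => 0 :=
    funext fun y => chr_rosenMetric_zero (hγ (y 0)) i j
  simp [RiemUp, hchr, pd]

lemma riemUp_rosenMetric_one_one (hγ : ∀ r, IsUnit (γ r)) (j k : Fin (m + 2)) :
    RiemUp (rosenMetric γ) 1 j k 1 x = 0 := by
  have hchr (k j : Fin (m + 2)) : Chr (rosenMetric γ) k 1 j = fun _ => 0 :=
    funext fun y => chr_rosenMetric_one_left (hγ (y 0)) k j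
  rw [RiemUp, pd_chr_rosenMetric_of_ne_zero one_ne_zero]
  simp [hchr, pd]

lemma pd_chr_rosenMetric_trace (hsymm : ∀ r, (γ r).IsSymm) (hγ : ∀ r, IsUnit (γ r))
    (i : Fin m) (j k : Fin (m + 2)) :
    pd j (Chr (rosenMetric γ) i.succ.succ i.succ.succ k) x =
      if j = 0 ∧ k = 0 then entrywiseDeriv (opticalMatrix γ) (x 0) i i else 0 := by
  have hchr : Chr (rosenMetric γ) i.succ.succ i.succ.succ k =
      fun y => if k = 0 then opticalMatrix γ (y 0) i i else 0 :=
    funext fun y => chr_rosenMetric_succ_succ_left hsymm (hγ (y 0)) i i k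
  rw [hchr, pd_comp_apply j 0 (fun r => if k = 0 then opticalMatrix γ r i i else 0)]
  by_cases hk : k = 0 <;> simp [hk, entrywiseDeriv]

lemma sum_chr_mul_chr_rosenMetric_trace (hsymm : ∀ r, (γ r).IsSymm) (hx : IsUnit (γ (x 0)))
    (i : Fin m) (j k : Fin (m + 2)) :
    ∑ p, Chr (rosenMetric γ) i.succ.succ i.succ.succ p x * Chr (rosenMetric γ) p j k x = 0 := by
  refine Finset.sum_eq_zero fun p _ => ?_
  obtain rfl | hp := eq_or_ne p 0
  · rw [chr_rosenMetric_zero hx, mul_zero]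
  · rw [chr_rosenMetric_succ_succ_left hsymm hx, if_neg hp, zero_mul]

lemma sum_chr_mul_chr_rosenMetric_cross (hsymm : ∀ r, (γ r).IsSymm) (hx : IsUnit (γ (x 0)))
    (i : Fin m) (j k : Fin (m + 2)) :
    ∑ p, Chr (rosenMetric γ) i.succ.succ j p x * Chr (rosenMetric γ) p i.succ.succ k x =
      if j = 0 ∧ k = 0 then (opticalMatrix γ (x 0) ^ 2) i i else 0 := by
  rw [Fin.sum_univ_succ, Fin.sum_univ_succ, chr_rosenMetric_zero hx, Fin.succ_zero_eq_one,
    chr_rosenMetric_one_right hx]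
  simp only [chr_rosenMetric_succ_succ_right hsymm hx, chr_rosenMetric_succ_succ_left hsymm hx]
  by_cases hj : j = 0 <;> by_cases hk : k = 0 <;> simp [hj, hk, pow_two, mul_apply]

lemma riemUp_rosenMetric_succ_succ (hsymm : ∀ r, (γ r).IsSymm) (hγ : ∀ r, IsUnit (γ r))
    (i : Fin m) (j k : Fin (m + 2)) :
    RiemUp (rosenMetric γ) i.succ.succ j k i.succ.succ x =
      if j = 0 ∧ k = 0 then
        -(entrywiseDeriv (opticalMatrix γ) (x 0) + opticalMatrix γ (x 0) ^ 2) i i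
      else 0 := by
  rw [RiemUp, pd_chr_rosenMetric_of_ne_zero (Fin.succ_ne_zero _),
    pd_chr_rosenMetric_trace hsymm hγ, Finset.sum_sub_distrib,
    sum_chr_mul_chr_rosenMetric_trace hsymm (hγ _), sum_chr_mul_chr_rosenMetric_cross hsymm (hγ _)]
  split_ifs
  · rw [Matrix.add_apply]
    ring
  · ring

theorem ric_rosenMetric (hsymm : ∀ r, (γ r).IsSymm) (hγ : ∀ r, IsUnit (γ r))
    (j k : Fin (m + 2)) :
    Ric (rosenMetric γ) j k x =
      if j = 0 ∧ k = 0 then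
        -(entrywiseDeriv (opticalMatrix γ) (x 0) + opticalMatrix γ (x 0) ^ 2).trace
      else 0 := by
  rw [Ric, Fin.sum_univ_succ, Fin.sum_univ_succ, riemUp_rosenMetric_zero hγ,
    Fin.succ_zero_eq_one, riemUp_rosenMetric_one_one hγ, zero_add, zero_add]
  simp only [riemUp_rosenMetric_succ_succ hsymm hγ]
  split_ifs
  · simp only [trace, diag_apply, Finset.sum_neg_distrib]
  · exact Finset.sum_const_zero

end Rosen

section Exponential

variable {m : ℕ}

lemma opticalMatrix_exp_smul_one (c r : ℝ) :
    opticalMatrix (fun s => Real.exp (c * s) • (1 : Matrix (Fin m) (Fin m) ℝ)) r =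
      (c / 2) • (1 : Matrix (Fin m) (Fin m) ℝ) := by
  have hderiv : entrywiseDeriv (fun s => Real.exp (c * s) • (1 : Matrix (Fin m) (Fin m) ℝ)) r =
      c • Real.exp (c * r) • (1 : Matrix (Fin m) (Fin m) ℝ) := by
    have hexp : HasDerivAt (fun s => Real.exp (c * s)) (Real.exp (c * r) * c) r := by
      simpa using ((hasDerivAt_id r).const_mul c).exp
    ext i j
    simp only [entrywiseDeriv, of_apply, Matrix.smul_apply, smul_eq_mul]
    rw [(hexp.mul_const _).deriv]
    ring
  have hunit : IsUnit (Real.exp (c * r) • (1 : Matrix (Fin m) (Fin m) ℝ)).det := by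
    simp [Real.exp_ne_zero]
  rw [opticalMatrix, hderiv, Matrix.mul_smul, nonsing_inv_mul _ hunit, smul_smul]
  ring_nf

theorem ric_rosenMetric_exp_smul_one (c : ℝ) (x : Fin (m + 2) → ℝ) (j k : Fin (m + 2)) :
    Ric (rosenMetric fun s => Real.exp (c * s) • (1 : Matrix (Fin m) (Fin m) ℝ)) j k x =
      if j = 0 ∧ k = 0 then -(m * (c / 2) ^ 2) else 0 := by
  have hsymm (r : ℝ) : (Real.exp (c * r) • (1 : Matrix (Fin m) (Fin m) ℝ)).IsSymm :=
    isSymm_one.smul _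
  have hunit (r : ℝ) : IsUnit (Real.exp (c * r) • (1 : Matrix (Fin m) (Fin m) ℝ)) :=
    isUnit_one.smul (Units.mk0 _ (Real.exp_ne_zero (c * r)))
  have hderiv (B : Matrix (Fin m) (Fin m) ℝ) (r : ℝ) : entrywiseDeriv (fun _ => B) r = 0 := by
    ext i j
    simp [entrywiseDeriv]
  rw [ric_rosenMetric hsymm hunit, funext (opticalMatrix_exp_smul_one c), hderiv, zero_add,
    smul_pow, one_pow, trace_smul, trace_one]
  simp [mul_comm]

end Exponential

/-- The Lorentzian plane wave metric `2 dr dt + Σᵢ e^{√2 r}(dxⁱ)²` on `ℝ^{n+1}` (coordinates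
`0 = r`, `1 = t`) satisfies `Ric = −((n−1)/2) dr ⊗ dr`. -/
theorem stmt_17 (n : ℕ) (hn : 2 ≤ n)
    (h : (Fin (n+1) → ℝ) → Matrix (Fin (n+1)) (Fin (n+1)) ℝ)
    (hh : ∀ x (i j : Fin (n+1)), h x i j =
      if (i = 0 ∧ j = 1) ∨ (i = 1 ∧ j = 0) then 1
      else if i = j ∧ 2 ≤ (i : ℕ) then Real.exp (Real.sqrt 2 * x 0)
      else 0) :
    ∀ (x : Fin (n+1) → ℝ) (j k : Fin (n+1)),
      Ric h j k x = if j = 0 ∧ k = 0 then -(((n : ℝ) - 1) / 2) else 0 := by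
  obtain ⟨m, rfl⟩ : ∃ m, n = m + 1 := Nat.exists_eq_add_of_le' (by lia)
  have hrosen : h = rosenMetric fun r => Real.exp (Real.sqrt 2 * r) • 1 := by
    ext x i j
    rw [hh, rosenMetric, hyperbolicSum_smul_one_apply]
  intro x j k
  have hsqrt : (Real.sqrt 2 / 2) ^ 2 = 1 / 2 := by
    rw [div_pow, Real.sq_sqrt zero_le_two]
    norm_num
  rw [hrosen, ric_rosenMetric_exp_smul_one, hsqrt]
  push_cast
  ring_nf
end

section
/- Let I ⊆ ℝ be an open interval, let H : I → ℝ be smooth and positive, and on I × ℝ² with coordinates (x¹, x², x³) let g_L be the Lorentzian metric represented by the matrix field with rows ((0, 1, 0), (1, H(x¹), 0), (0, 0, H(x¹)/2)). Then the coordinate Ricci tensor of g_L satisfies Ric_{g_L} = g_L (equivalently, g_L is an Einstein metric with Einstein constant 1, hence of constant positive sectional curvature in dimension 3) if and only if there exists a ∈ ℝ such that H(x¹) = (x¹ + a)²/2 for all x¹ ∈ I. -/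
open Matrix

/-!
Over the interval all objects depend on `s = x¹` alone, so only the first partial derivative
survives. For the wider family `2 dx¹dx² + H (dx²)² + F (dx³)²` the equation `Ric = g` becomes
`H'' = 1`, `H' F' = 2 F`, `2 F F'' = F'²`. For `F = c H` this is `H'' = 1`, `H'² = 2 H`: the first
equation makes `H' - s` a constant `a`, and the second reads off `H = (s + a)² / 2` without a
further integration.
-/

section OneVariable

variable {m : ℕ} {i₀ : Fin m} {x : Fin m → ℝ}

lemma pd_of_eventuallyEq_comp_apply {φ : (Fin m → ℝ) → ℝ} {f : ℝ → ℝ} {f' : ℝ}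
    (hφ : φ =ᶠ[nhds x] fun y => f (y i₀)) (hf : HasDerivAt f f' (x i₀)) (i : Fin m) :
    pd i φ x = (Pi.single i₀ f' : Fin m → ℝ) i := by
  have hcomp : HasFDerivAt (fun y : Fin m → ℝ => f (y i₀))
      (f' • ContinuousLinearMap.proj (R := ℝ) (φ := fun _ : Fin m => ℝ) i₀) x :=
    hf.comp_hasFDerivAt x (hasFDerivAt_apply i₀ x)
  rw [pd, hφ.fderiv_eq, hcomp.fderiv]
  simp [Pi.single_apply, eq_comm]

lemma chr_of_eventuallyEq_comp_apply {g : (Fin m → ℝ) → Matrix (Fin m) (Fin m) ℝ}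
    {G : ℝ → Matrix (Fin m) (Fin m) ℝ} {G' : Matrix (Fin m) (Fin m) ℝ}
    (hg : g =ᶠ[nhds x] fun y => G (y i₀))
    (hG : ∀ i j, HasDerivAt (fun s => G s i j) (G' i j) (x i₀)) (k i j : Fin m) :
    Chr g k i j x = (1 / 2) * ∑ l, (G (x i₀))⁻¹ k l *
      ((Pi.single i₀ (G' j l) : Fin m → ℝ) i + (Pi.single i₀ (G' i l) : Fin m → ℝ) j
        - (Pi.single i₀ (G' i j) : Fin m → ℝ) l) := by
  have hpd (l a b : Fin m) :
      pd l (fun y => g y a b) x = (Pi.single i₀ (G' a b) : Fin m → ℝ) l :=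
    pd_of_eventuallyEq_comp_apply (hg.fun_comp fun A => A a b) (hG a b) l
  simp only [Chr, hpd, hg.eq_of_nhds]

lemma ric_of_chr_eventuallyEq_comp_apply {g : (Fin m → ℝ) → Matrix (Fin m) (Fin m) ℝ}
    {Γ : ℝ → Fin m → Matrix (Fin m) (Fin m) ℝ} {Γ' : Fin m → Matrix (Fin m) (Fin m) ℝ}
    (hΓ : ∀ k i j, Chr g k i j =ᶠ[nhds x] fun y => Γ (y i₀) k i j)
    (hΓ' : ∀ k i j, HasDerivAt (fun s => Γ s k i j) (Γ' k i j) (x i₀)) (j k : Fin m) :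
    Ric g j k x = Γ' i₀ j k - (Pi.single i₀ (∑ i, Γ' i i k) : Fin m → ℝ) j
      + ∑ i, ∑ p, (Γ (x i₀) i i p * Γ (x i₀) p j k - Γ (x i₀) i j p * Γ (x i₀) p i k) := by
  have hpd (l a b c : Fin m) :
      pd l (Chr g a b c) x = (Pi.single i₀ (Γ' a b c) : Fin m → ℝ) l :=
    pd_of_eventuallyEq_comp_apply (hΓ a b c) (hΓ' a b c) l
  have hsingle : ∑ i, (Pi.single i₀ (Γ' i i k) : Fin m → ℝ) j =
      (Pi.single i₀ (∑ i, Γ' i i k) : Fin m → ℝ) j := by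
    by_cases hj : j = i₀ <;> simp [hj]
  simp only [Ric, RiemUp, hpd, (hΓ _ _ _).eq_of_nhds, Finset.sum_add_distrib,
    Finset.sum_sub_distrib, hsingle]
  simp [Pi.single_apply]

end OneVariable

/-- The matrix of `2 dx¹dx² + h (dx²)² + f (dx³)²`, a metric for which `∂₁` is a null vector. -/
def nullMetric (h f : ℝ) : Matrix (Fin 3) (Fin 3) ℝ :=
  !![0, 1, 0; 1, h, 0; 0, 0, f]

/-- The Christoffel symbols `Γ^k_{ij}` (the `(i, j)` entry of the `k`-th matrix) of `nullMetric`
with coefficients depending on `x¹`, where `h'`, `f'` stand for the derivatives of `h`, `f`. -/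
noncomputable def nullMetricChr (h h' f f' : ℝ) : Fin 3 → Matrix (Fin 3) (Fin 3) ℝ :=
  ![!![0, h' / 2, 0; h' / 2, h * h' / 2, 0; 0, 0, h * f' / 2],
    !![0, 0, 0; 0, -h' / 2, 0; 0, 0, -f' / 2],
    !![0, 0, f' / (2 * f); 0, 0, 0; f' / (2 * f), 0, 0]]

/-- The `x¹`-derivatives of the Christoffel symbols `nullMetricChr`. -/
noncomputable def nullMetricChrDeriv (h h' h'' f f' f'' : ℝ) :
    Fin 3 → Matrix (Fin 3) (Fin 3) ℝ :=
  ![!![0, h'' / 2, 0; h'' / 2, (h' * h' + h * h'') / 2, 0; 0, 0, (h' * f' + h * f'') / 2],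
    !![0, 0, 0; 0, -h'' / 2, 0; 0, 0, -f'' / 2],
    !![0, 0, (f'' * f - f' * f') / (2 * f ^ 2); 0, 0, 0;
       (f'' * f - f' * f') / (2 * f ^ 2), 0, 0]]

/-- The Ricci tensor of `nullMetric` with coefficients depending on `x¹`, in terms of the values
of the coefficients and of their first two derivatives. -/
noncomputable def nullMetricRic (h h' h'' f f' f'' : ℝ) : Matrix (Fin 3) (Fin 3) ℝ :=
  !![f' ^ 2 / (4 * f ^ 2) - f'' / (2 * f), h'' / 2 + h' * f' / (4 * f), 0;
     h'' / 2 + h' * f' / (4 * f), h * (h'' / 2 + h' * f' / (4 * f)), 0;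
     0, 0, (h * f'' + h' * f') / 2 - h * f' ^ 2 / (4 * f)]

lemma nullMetric_inv {h f : ℝ} (hf : f ≠ 0) :
    (nullMetric h f)⁻¹ = !![-h, 1, 0; 1, 0, 0; 0, 0, 1 / f] := by
  apply Matrix.inv_eq_right_inv
  ext i j
  fin_cases i <;> fin_cases j <;> simp [nullMetric, Matrix.mul_apply, Fin.sum_univ_three, hf]

lemma hasDerivAt_nullMetric {H F : ℝ → ℝ} {h' f' s : ℝ} (hH : HasDerivAt H h' s)
    (hF : HasDerivAt F f' s) (i j : Fin 3) :
    HasDerivAt (fun t => nullMetric (H t) (F t) i j)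
      ((!![0, 0, 0; 0, h', 0; 0, 0, f'] : Matrix (Fin 3) (Fin 3) ℝ) i j) s := by
  have hzero := hasDerivAt_const s (0 : ℝ)
  have hone := hasDerivAt_const s (1 : ℝ)
  fin_cases i <;> fin_cases j <;> assumption

lemma hasDerivAt_nullMetricChr {H H' F F' : ℝ → ℝ} {h'' f'' s : ℝ}
    (hH : HasDerivAt H (H' s) s) (hH' : HasDerivAt H' h'' s)
    (hF : HasDerivAt F (F' s) s) (hF' : HasDerivAt F' f'' s) (h0 : F s ≠ 0) (k i j : Fin 3) :
    HasDerivAt (fun t => nullMetricChr (H t) (H' t) (F t) (F' t) k i j)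
      (nullMetricChrDeriv (H s) (H' s) h'' (F s) (F' s) f'' k i j) s := by
  have hzero := hasDerivAt_const s (0 : ℝ)
  have hH'_half := hH'.div_const 2
  have hHH'_half := (hH.mul hH').div_const 2
  have hHF'_half := (hH.mul hF').div_const 2
  have hH'_neg_half := hH'.neg.div_const 2
  have hF'_neg_half := hF'.neg.div_const 2
  have hlog : HasDerivAt (fun t => F' t / (2 * F t))
      ((f'' * F s - F' s * F' s) / (2 * F s ^ 2)) s := by
    refine (hF'.div (hF.const_mul 2) (mul_ne_zero two_ne_zero h0)).congr_deriv ?_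
    field_simp
  fin_cases k <;> fin_cases i <;> fin_cases j <;> assumption

section Curvature

variable {g : (Fin 3 → ℝ) → Matrix (Fin 3) (Fin 3) ℝ} {H F : ℝ → ℝ} {x : Fin 3 → ℝ}

lemma chr_eq_nullMetricChr {h' f' : ℝ}
    (hg : g =ᶠ[nhds x] fun y => nullMetric (H (y 0)) (F (y 0)))
    (hH : HasDerivAt H h' (x 0)) (hF : HasDerivAt F f' (x 0)) (h0 : F (x 0) ≠ 0)
    (k i j : Fin 3) :
    Chr g k i j x = nullMetricChr (H (x 0)) h' (F (x 0)) f' k i j := by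
  rw [chr_of_eventuallyEq_comp_apply (G := fun s => nullMetric (H s) (F s)) hg
    (hasDerivAt_nullMetric hH hF), nullMetric_inv h0]
  fin_cases k <;> fin_cases i <;> fin_cases j <;>
    simp [nullMetricChr, Fin.sum_univ_three] <;> field_simp

lemma ric_eq_nullMetricRic {I : Set ℝ} (hI : IsOpen I) {H' F' : ℝ → ℝ} {h'' f'' : ℝ}
    (hg : ∀ y : Fin 3 → ℝ, y 0 ∈ I → g y = nullMetric (H (y 0)) (F (y 0)))
    (hH : ∀ s ∈ I, HasDerivAt H (H' s) s) (hF : ∀ s ∈ I, HasDerivAt F (F' s) s)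
    (h0 : ∀ s ∈ I, F s ≠ 0) (hx : x 0 ∈ I)
    (hH' : HasDerivAt H' h'' (x 0)) (hF' : HasDerivAt F' f'' (x 0)) (j k : Fin 3) :
    Ric g j k x =
      nullMetricRic (H (x 0)) (H' (x 0)) h'' (F (x 0)) (F' (x 0)) f'' j k := by
  have hnear {y : Fin 3 → ℝ} (hy : y 0 ∈ I) : ∀ᶠ z in nhds y, z 0 ∈ I :=
    (continuous_apply 0).continuousAt.eventually (hI.mem_nhds hy)
  have hchr (k i j : Fin 3) : Chr g k i j =ᶠ[nhds x]
      fun y => nullMetricChr (H (y 0)) (H' (y 0)) (F (y 0)) (F' (y 0)) k i j :=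
    (hnear hx).mono fun y hy =>
      chr_eq_nullMetricChr ((hnear hy).mono hg) (hH _ hy) (hF _ hy) (h0 _ hy) k i j
  rw [ric_of_chr_eventuallyEq_comp_apply
    (Γ := fun s => nullMetricChr (H s) (H' s) (F s) (F' s)) hchr
    (hasDerivAt_nullMetricChr (hH _ hx) hH' (hF _ hx) hF' (h0 _ hx))]
  have := h0 _ hx
  fin_cases j <;> fin_cases k <;>
    simp [nullMetricChr, nullMetricChrDeriv, nullMetricRic, Fin.sum_univ_three] <;>
    field_simp <;> ring

end Curvature

lemma nullMetricRic_eq_nullMetric_iff {h h' h'' f f' f'' : ℝ} (hf : f ≠ 0) :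
    nullMetricRic h h' h'' f f' f'' = nullMetric h f ↔
      h'' = 1 ∧ h' * f' = 2 * f ∧ 2 * f * f'' = f' ^ 2 := by
  constructor
  · intro hRic
    have h11 : f' ^ 2 / (4 * f ^ 2) - f'' / (2 * f) = 0 := congr_fun₂ hRic 0 0
    have h12 : h'' / 2 + h' * f' / (4 * f) = 1 := congr_fun₂ hRic 0 1
    have h33 : (h * f'' + h' * f') / 2 - h * f' ^ 2 / (4 * f) = f := congr_fun₂ hRic 2 2
    have hff : 2 * f * f'' = f' ^ 2 := by
      field_simp at h11
      linarith
    have hhf : h' * f' = 2 * f := by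
      rw [← hff] at h33
      field_simp at h33
      linarith
    refine ⟨?_, hhf, hff⟩
    rw [hhf] at h12
    field_simp at h12
    linarith
  · rintro ⟨rfl, hhf, hff⟩
    ext i j
    fin_cases i <;> fin_cases j <;> simp [nullMetricRic, nullMetric, hhf, ← hff] <;>
      field_simp <;> ring

lemma nullMetricRic_const_mul_eq_nullMetric_iff {c h h' h'' : ℝ} (hc : c ≠ 0) (hh : h ≠ 0) :
    nullMetricRic h h' h'' (c * h) (c * h') (c * h'') = nullMetric h (c * h) ↔
      h'' = 1 ∧ h' ^ 2 = 2 * h := by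
  have hmixed : h' * (c * h') = 2 * (c * h) ↔ h' ^ 2 = 2 * h := by
    rw [mul_left_comm, mul_left_comm 2, mul_right_inj' hc, sq]
  rw [nullMetricRic_eq_nullMetric_iff (mul_ne_zero hc hh), hmixed, ← and_assoc,
    and_iff_left_iff_imp]
  rintro ⟨rfl, hsq⟩
  rw [mul_pow, hsq]
  ring

lemma deriv_deriv_eq_one_and_deriv_sq_eq_iff {I : Set ℝ} (hI : IsOpen I)
    (hI_conn : I.OrdConnected) {H : ℝ → ℝ} :
    (∀ s ∈ I, deriv (deriv H) s = 1 ∧ deriv H s ^ 2 = 2 * H s) ↔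
      ∃ a : ℝ, ∀ s ∈ I, H s = (s + a) ^ 2 / 2 := by
  constructor
  · intro hODE
    have hderiv_sub : ∀ s ∈ I, HasDerivAt (fun t => deriv H t - t) 0 s := fun s hs => by
      have hdiff : DifferentiableAt ℝ (deriv H) s :=
        differentiableAt_of_deriv_ne_zero (by simp [(hODE s hs).1])
      simpa [(hODE s hs).1] using hdiff.hasDerivAt.fun_sub (hasDerivAt_id' s)
    obtain ⟨a, ha⟩ := hI.exists_is_const_of_deriv_eq_zero hI_conn.isPreconnected
      (fun s hs => (hderiv_sub s hs).differentiableAt.differentiableWithinAt)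
      (fun s hs => (hderiv_sub s hs).deriv)
    refine ⟨a, fun s hs => ?_⟩
    rw [← ha s hs, add_sub_cancel, (hODE s hs).2]
    ring
  · rintro ⟨a, ha⟩ s hs
    have hderiv : Set.EqOn (deriv H) (fun t => t + a) I := fun t ht => by
      rw [(Set.EqOn.eventuallyEq_of_mem ha (hI.mem_nhds ht)).deriv_eq]
      simp
    have hderiv₂ : deriv (deriv H) s = 1 := by
      rw [(hderiv.eventuallyEq_of_mem (hI.mem_nhds hs)).deriv_eq]
      simp
    refine ⟨hderiv₂, ?_⟩
    rw [hderiv hs, ha s hs]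
    ring

theorem stmt_19_general {I : Set ℝ} (hI : IsOpen I) (hI_conn : I.OrdConnected) {H : ℝ → ℝ}
    (hH : DifferentiableOn ℝ H I) (hH' : DifferentiableOn ℝ (deriv H) I)
    (h0 : ∀ s ∈ I, H s ≠ 0) {c : ℝ} (hc : c ≠ 0)
    {g : (Fin 3 → ℝ) → Matrix (Fin 3) (Fin 3) ℝ}
    (hg : ∀ x : Fin 3 → ℝ, x 0 ∈ I → g x = nullMetric (H (x 0)) (c * H (x 0))) :
    (∀ x : Fin 3 → ℝ, x 0 ∈ I → ∀ j k : Fin 3, Ric g j k x = g x j k) ↔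
      ∃ a : ℝ, ∀ s ∈ I, H s = (s + a) ^ 2 / 2 := by
  have hd (s : ℝ) (hs : s ∈ I) := (hH.differentiableAt (hI.mem_nhds hs)).hasDerivAt
  have hd' (s : ℝ) (hs : s ∈ I) := (hH'.differentiableAt (hI.mem_nhds hs)).hasDerivAt
  have einstein_iff (x : Fin 3 → ℝ) (hx : x 0 ∈ I) : (∀ j k, Ric g j k x = g x j k) ↔
      deriv (deriv H) (x 0) = 1 ∧ deriv H (x 0) ^ 2 = 2 * H (x 0) := by
    have hRic := ric_eq_nullMetricRic (F := fun s => c * H s) (F' := fun s => c * deriv H s) hI hg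
      hd (fun s hs => (hd s hs).const_mul c) (fun s hs => mul_ne_zero hc (h0 s hs)) hx
      (hd' _ hx) ((hd' _ hx).const_mul c)
    simp only [hRic, hg x hx, Matrix.ext_iff]
    exact nullMetricRic_const_mul_eq_nullMetric_iff hc (h0 _ hx)
  rw [← deriv_deriv_eq_one_and_deriv_sq_eq_iff hI hI_conn]
  exact ⟨fun h s hs => (einstein_iff (fun _ => s) hs).1 (h _ hs),
    fun h x hx => (einstein_iff x hx).2 (h _ hx)⟩

/-- On `I × ℝ²`, the Lorentzian metric with matrix `((0,1,0),(1,H(x¹),0),(0,0,H(x¹)/2))`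
satisfies `Ric = g_L` (is Einstein with constant 1, hence of constant positive curvature in
dimension 3) iff `H(x¹) = (x¹ + a)²/2` on `I` for some constant `a`. -/
theorem stmt_19 (I : Set ℝ) (hI_open : IsOpen I) (hI_conn : I.OrdConnected)
    (H : ℝ → ℝ) (hH_smooth : ContDiffOn ℝ (⊤ : ℕ∞) H I) (hH_pos : ∀ s ∈ I, 0 < H s)
    (g : (Fin 3 → ℝ) → Matrix (Fin 3) (Fin 3) ℝ)
    (hg : ∀ x : Fin 3 → ℝ, g x = !![0, 1, 0; 1, H (x 0), 0; 0, 0, H (x 0) / 2]) :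
    (∀ x : Fin 3 → ℝ, x 0 ∈ I → ∀ j k : Fin 3, Ric g j k x = g x j k) ↔
    (∃ a : ℝ, ∀ s ∈ I, H s = (s + a)^2 / 2) :=
  stmt_19_general hI_open hI_conn (hH_smooth.differentiableOn (by simp))
    ((hH_smooth.deriv_of_isOpen (m := (⊤ : ℕ∞)) hI_open (by simp)).differentiableOn (by simp))
    (fun s hs => (hH_pos s hs).ne') (inv_ne_zero two_ne_zero)
    (fun x _ => by rw [hg, nullMetric, inv_mul_eq_div])
end
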